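/- arXiv:1305.5966 — 2 statements merged into one kernel-verified Lean document; each statement's English description precedes it below -/
import Mathlib

section
/- With the conventions above: if a graded module E over R = C[x_0,...,x_n] has strictly increasing maximal degree sequence (s_0, s_1, ..., s_{r-1}) over R, then viewed as a module over S = R[y_1,...,y_N] (annihilated by the y-variables), its maximal degree sequence over S is (s_0, s_1, ..., s_{r-1}, s_{r-1}+1, s_{r-1}+2, ..., s_{r-1}+N). -/
/-!
Graded Betti numbers are computed by Koszul homology: for a graded module `M` over
`ℂ[x_0, …, x_{m-1}]`, the Betti number `β_{i,j}(M)` is nonzero exactly when the Koszul homology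
`H_i(x_0, …, x_{m-1}; M)_j` is nonzero (`Van_iff`). This is proved by dimension shifting
(`SES.shift`, `SES.bottom`) along the syzygies `0 → Z_{i+1} → F_{i+1} → Z_i → 0` of a minimal
resolution. The inputs are that the variables form a regular sequence on a graded free module, so
that its Koszul complex is acyclic (`Van_of_regular`, `Van_free_pos`), and that by minimality
`Z_i ⊆ 𝔪 F_i`, so that `H_0(Z_i) → H_0(F_i)` vanishes (`syz_null`).

The Koszul complex is built as an iterated mapping cone, one variable at a time. On `E` the
variables `y_1, …, y_N` act as zero, so each cone over one of them splits, and the Koszul homology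
of `E` over `S` in bidegree `(i, j)` is nonzero iff that over `R` is nonzero in some bidegree
`(i - q, j - q)` with `0 ≤ q ≤ N` (`not_Van_add_iff`). This is the part of
`β_{i,j}^S = ∑_q β_{i-q,j-q}^R * binom(N, q)` that matters for maximal degrees
(`betti_ne_zero_iff`). Since the maximal degrees over `R` increase by at least one at each step, the
top degree in column `i` over `S` comes from the largest admissible column `min i (r - 1)` over `R`.
-/

open MvPolynomial DirectSum

noncomputable section

/-- The standard graded polynomial ring `ℂ[x_1,…,x_m]`. -/
abbrev PolyS (m : ℕ) : Type := MvPolynomial (Fin m) ℂ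

/-- The degree-`e` homogeneous piece of the polynomial ring (zero for `e < 0`). -/
def hpiece (m : ℕ) (e : ℤ) : Submodule ℂ (PolyS m) :=
  if 0 ≤ e then homogeneousSubmodule (Fin m) ℂ e.toNat else ⊥

/-- The graded free module `⊕_j S(-j)^{b j}`. -/
abbrev FreeMod (m : ℕ) (b : ℤ → ℕ) : Type :=
  DirectSum ℤ (fun j : ℤ => Fin (b j) → PolyS m)

/-- The degree-`deg` homogeneous piece of the graded free module `⊕_j S(-j)^{b j}`. -/
def freePiece (m : ℕ) (b : ℤ → ℕ) (deg : ℤ) : Submodule ℂ (FreeMod m b) where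
  carrier := {x | ∀ (j : ℤ) (i : Fin (b j)), x j i ∈ hpiece m (deg - j)}
  add_mem' := by
    intro x y hx hy j i
    simp only [DirectSum.add_apply, Pi.add_apply]
    exact add_mem (hx j i) (hy j i)
  zero_mem' := by
    intro j i
    simp only [DirectSum.zero_apply, Pi.zero_apply]
    exact zero_mem _
  smul_mem' := by
    intro c x hx j i
    simp only [DirectSum.smul_apply, Pi.smul_apply]
    exact Submodule.smul_mem _ c (hx j i)

/-- The irrelevant maximal ideal `(x_1,…,x_m)`. -/
def mIdeal (m : ℕ) : Ideal (PolyS m) := Ideal.span (Set.range (X : Fin m → PolyS m))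

/-- A (ℤ-)grading on an `S`-module, compatible with the standard grading of `S`. -/
structure GradedSMod (m : ℕ) (M : Type) [AddCommGroup M] [Module ℂ M]
    [Module (PolyS m) M] [IsScalarTower ℂ (PolyS m) M] where
  piece : ℤ → Submodule ℂ M
  internal : DirectSum.IsInternal piece
  smul_mem : ∀ (d : ℕ) (p : PolyS m), p ∈ homogeneousSubmodule (Fin m) ℂ d →
    ∀ (j : ℤ) (x : M), x ∈ piece j → p • x ∈ piece (d + j)

/-- A minimal graded free resolution of a graded module `M`, recorded together with
its graded Betti numbers `b i j`. -/
structure MinFreeRes (m : ℕ) (M : Type) [AddCommGroup M] [Module ℂ M]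
    [Module (PolyS m) M] [IsScalarTower ℂ (PolyS m) M] (gM : GradedSMod m M) where
  b : ℕ → ℤ → ℕ
  bfin : ∀ i, (Function.support (b i)).Finite
  diff : ∀ i : ℕ, FreeMod m (b (i + 1)) →ₗ[PolyS m] FreeMod m (b i)
  aug : FreeMod m (b 0) →ₗ[PolyS m] M
  aug_surjective : Function.Surjective aug
  exact_aug : LinearMap.ker aug = LinearMap.range (diff 0)
  exact : ∀ i, LinearMap.ker (diff i) = LinearMap.range (diff (i + 1))
  graded_diff : ∀ (i : ℕ) (deg : ℤ) (x : FreeMod m (b (i + 1))),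
    x ∈ freePiece m (b (i + 1)) deg → diff i x ∈ freePiece m (b i) deg
  graded_aug : ∀ (deg : ℤ) (x : FreeMod m (b 0)),
    x ∈ freePiece m (b 0) deg → aug x ∈ gM.piece deg
  minimal : ∀ (i : ℕ) (x : FreeMod m (b (i + 1))),
    diff i x ∈ (mIdeal m) • (⊤ : Submodule (PolyS m) (FreeMod m (b i)))

/-- `tmax c` : the largest degree `j` with `c j ≠ 0` (the `i`-th entry of the maximal
degree sequence, when `c = b i`). -/
def tmax (c : ℤ → ℕ) : ℤ := sSup {j | c j ≠ 0}

/-- The Castelnuovo–Mumford regularity read off from a Betti table. -/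
def regOf (b : ℕ → ℤ → ℕ) : ℤ := sSup {z | ∃ i j, b i j ≠ 0 ∧ z = j - (i : ℤ)}


/-- The grading on (the underlying module of) a homogeneous ideal `J` induced from the
standard grading of the polynomial ring. -/
def NatIdealGrading (m : ℕ) (J : Ideal (PolyS m)) (g : GradedSMod m ↥J) : Prop :=
  ∀ (j : ℤ) (x : ↥J), x ∈ g.piece j ↔ (x : PolyS m) ∈ hpiece m j

/-- The ideal `I = (y_1,…,y_N)` inside `S = ℂ[x_0,…,x_n,y_1,…,y_N]`, where the last `N`
variables are the `y`'s. -/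
def yIdeal (n N : ℕ) : Ideal (PolyS (n + 1 + N)) :=
  Ideal.span {p | ∃ i : Fin (n + 1 + N), n + 1 ≤ (i : ℕ) ∧ p = X i}

/-- Cohen–Macaulayness of a module with minimal free resolution `F` of length `r`,
expressed through the standard characterization: `Ext^i(M, S) = 0` for `i < r = pd M`,
i.e. the dual of the minimal free resolution is exact except at the last spot. -/
def IsCMres (m : ℕ) {M : Type} [AddCommGroup M] [Module ℂ M]
    [Module (PolyS m) M] [IsScalarTower ℂ (PolyS m) M] {gM : GradedSMod m M}
    (F : MinFreeRes m M gM) (r : ℕ) : Prop :=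
  (0 < r → LinearMap.ker (F.diff 0).dualMap = ⊥) ∧
  ∀ i, i + 1 < r →
    LinearMap.ker ((F.diff (i + 1)).dualMap) = LinearMap.range ((F.diff i).dualMap)

/-- A bundled graded module over `ℂ[x_1,…,x_m]`. -/
structure GradedModuleBundle (m : ℕ) where
  carrier : Type
  [isAddCommGroup : AddCommGroup carrier]
  [isModC : Module ℂ carrier]
  [isModS : Module (PolyS m) carrier]
  [isTower : IsScalarTower ℂ (PolyS m) carrier]
  grading : GradedSMod m carrier

attribute [instance] GradedModuleBundle.isAddCommGroup GradedModuleBundle.isModC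
  GradedModuleBundle.isModS GradedModuleBundle.isTower

/-- The projection `S = ℂ[x_0,…,x_n,y_1,…,y_N] → R = ℂ[x_0,…,x_n]` killing the `y`
variables. -/
def killY (n N : ℕ) : PolyS (n + 1 + N) →ₐ[ℂ] PolyS (n + 1) :=
  MvPolynomial.aeval (fun i : Fin (n + 1 + N) =>
    if h : (i : ℕ) < n + 1 then X ⟨(i : ℕ), h⟩ else 0)

/-! ### Iterated mapping cones -/

/-- The underlying group of the Koszul complex on `k` operators of `M`: the direct sum of `2 ^ k`
copies of `M`, organised as an iterated mapping cone. Homological and internal degrees are not part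
of the type; they are recorded by `kpiece`. -/
def KT (M : Type) : ℕ → Type
  | 0 => M
  | k + 1 => KT M k × KT M k

instance KT.instGroup (M : Type) [AddCommGroup M] : ∀ k, AddCommGroup (KT M k)
  | 0 => inferInstanceAs (AddCommGroup M)
  | k + 1 =>
    letI := KT.instGroup M k
    inferInstanceAs (AddCommGroup (KT M k × KT M k))

/-- The element `(u, v)` of the mapping cone. -/
def kp {M : Type} {k : ℕ} (u v : KT M k) : KT M (k + 1) := ((u, v) : KT M k × KT M k)

theorem exists_kp {M : Type} {k : ℕ} (u : KT M (k + 1)) : ∃ a b, u = kp a b := ⟨u.1, u.2, rfl⟩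

theorem kp_inj {M : Type} {k : ℕ} {a b c d : KT M k} : kp a b = kp c d ↔ a = c ∧ b = d := Prod.mk_inj

section Koszul

variable {M N L : Type} [AddCommGroup M] [AddCommGroup N] [AddCommGroup L]

/-- The map induced by `f` on the underlying groups of Koszul complexes. -/
def kmap (f : M →+ N) : ∀ k, KT M k →+ KT N k
  | 0 => f
  | k + 1 => AddMonoidHom.prodMap (kmap f k) (kmap f k)

/-- The Koszul differential of the operators `x 0, …, x (k - 1)`: at each stage it is the
differential `(u, v) ↦ (d u + x k v, - d v)` of the mapping cone of `x k`. -/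
def kd (x : ℕ → M →+ M) : ∀ k, KT M k →+ KT M k
  | 0 => 0
  | k + 1 => AddMonoidHom.prod
      ((kd x k).comp (AddMonoidHom.fst _ _) + (kmap (x k) k).comp (AddMonoidHom.snd _ _))
      (-(kd x k).comp (AddMonoidHom.snd _ _))

/-- The part of the Koszul complex in homological degree `i` and internal degree `j`, for a
grading `P` of `M` in which the operators have degree one. -/
def kpiece (P : ℤ → AddSubgroup M) : ∀ k, ℤ → ℤ → AddSubgroup (KT M k)
  | 0, i, j => if i = 0 then P j else ⊥
  | k + 1, i, j => (kpiece P k i j).prod (kpiece P k (i - 1) (j - 1))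

/-- Vanishing of the Koszul homology of `x 0, …, x (k - 1)` on `M` in bidegree `(i, j)`. -/
def Van (x : ℕ → M →+ M) (P : ℤ → AddSubgroup M) (k : ℕ) (i j : ℤ) : Prop :=
  ∀ f ∈ kpiece P k i j, kd x k f = 0 → ∃ g ∈ kpiece P k (i + 1) j, kd x k g = f

/-- Commuting operators of degree one for the grading `P`. -/
structure GOp (x : ℕ → M →+ M) (P : ℤ → AddSubgroup M) : Prop where
  comm : ∀ a b v, x a (x b v) = x b (x a v)
  deg : ∀ a j, ∀ v ∈ P j, x a v ∈ P (j + 1)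

theorem kp_zero {k : ℕ} : (0 : KT M (k + 1)) = kp 0 0 := rfl

theorem kmap_kp (f : M →+ N) (k : ℕ) (u v : KT M k) :
    kmap f (k + 1) (kp u v) = kp (kmap f k u) (kmap f k v) := rfl

theorem kd_kp (x : ℕ → M →+ M) (k : ℕ) (u v : KT M k) :
    kd x (k + 1) (kp u v) = kp (kd x k u + kmap (x k) k v) (-kd x k v) := rfl

theorem kp_mem (P : ℤ → AddSubgroup M) (k : ℕ) (i j : ℤ) (u v : KT M k) :
    kp u v ∈ kpiece P (k + 1) i j ↔
      u ∈ kpiece P k i j ∧ v ∈ kpiece P k (i - 1) (j - 1) := Iff.rfl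

theorem kpiece_zero_zero (P : ℤ → AddSubgroup M) (j : ℤ) :
    kpiece P 0 0 j = (P j : AddSubgroup M) := if_pos rfl

theorem kpiece_zero_ne (P : ℤ → AddSubgroup M) {i : ℤ} (hi : i ≠ 0) (j : ℤ) :
    kpiece P 0 i j = (⊥ : AddSubgroup (KT M 0)) := if_neg hi

theorem kmap_kmap (f : M →+ N) (g : N →+ L) (k : ℕ) (u : KT M k) :
    kmap g k (kmap f k u) = kmap (g.comp f) k u := by
  induction k with
  | zero => rfl
  | succ k ih => obtain ⟨u, v, rfl⟩ := exists_kp u; simp only [kmap_kp, ih]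

theorem kmap_zero (k : ℕ) (u : KT M k) : kmap (0 : M →+ N) k u = 0 := by
  induction k with
  | zero => rfl
  | succ k ih => obtain ⟨u, v, rfl⟩ := exists_kp u; simp only [kmap_kp, ih]; rfl

theorem kd_kmap {x : ℕ → M →+ M} {x' : ℕ → N →+ N} {f : M →+ N}
    (hf : ∀ a v, f (x a v) = x' a (f v)) (k : ℕ) (u : KT M k) :
    kd x' k (kmap f k u) = kmap f k (kd x k u) := by
  induction k with
  | zero => exact (map_zero f).symm
  | succ k ih =>
    obtain ⟨u, v, rfl⟩ := exists_kp u
    have : (x' k).comp f = f.comp (x k) := by ext v; simp [hf]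
    simp only [kmap_kp, kd_kp, ih, kmap_kmap, this, map_add, map_neg]

theorem kd_kd {x : ℕ → M →+ M} {P : ℤ → AddSubgroup M} (h : GOp x P) (k : ℕ) (u : KT M k) :
    kd x k (kd x k u) = 0 := by
  induction k with
  | zero => rfl
  | succ k ih =>
    obtain ⟨u, v, rfl⟩ := exists_kp u
    have := kd_kmap (f := x k) (x := x) (x' := x) (fun a v => h.comm _ _ _) k v
    simp only [kd_kp, map_add, map_neg, ih, this, kp_zero]
    simp

theorem kmap_mem {P : ℤ → AddSubgroup M} {Q : ℤ → AddSubgroup N} {f : M →+ N} {e : ℤ}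
    (hf : ∀ j, ∀ v ∈ P j, f v ∈ Q (j + e)) (k : ℕ) (i j : ℤ) (u : KT M k)
    (hu : u ∈ kpiece P k i j) : kmap f k u ∈ kpiece Q k i (j + e) := by
  induction k generalizing i j with
  | zero =>
    by_cases hi : i = 0
    · subst hi; rw [kpiece_zero_zero] at hu ⊢; exact hf _ _ hu
    · rw [kpiece_zero_ne _ hi, AddSubgroup.mem_bot] at hu
      rw [hu, map_zero]; exact zero_mem _
  | succ k ih =>
    obtain ⟨u, v, rfl⟩ := exists_kp u
    rw [kp_mem] at hu
    rw [kmap_kp, kp_mem]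
    refine ⟨ih _ _ _ hu.1, ?_⟩
    have := ih _ _ _ hu.2
    rwa [show j - 1 + e = j + e - 1 by ring] at this

theorem kmap_mem₀ {P : ℤ → AddSubgroup M} {Q : ℤ → AddSubgroup N} {f : M →+ N}
    (hf : ∀ j, ∀ v ∈ P j, f v ∈ Q j) (k : ℕ) (i j : ℤ) (u : KT M k)
    (hu : u ∈ kpiece P k i j) : kmap f k u ∈ kpiece Q k i j := by
  have := kmap_mem (P := P) (Q := Q) (f := f) (e := 0) (by simpa using hf) k i j u hu
  simpa using this

theorem kd_mem {x : ℕ → M →+ M} {P : ℤ → AddSubgroup M} (h : GOp x P) (k : ℕ) (i j : ℤ)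
    (u : KT M k) (hu : u ∈ kpiece P k i j) : kd x k u ∈ kpiece P k (i - 1) j := by
  induction k generalizing i j with
  | zero => exact zero_mem _
  | succ k ih =>
    obtain ⟨u, v, rfl⟩ := exists_kp u
    rw [kp_mem] at hu
    rw [kd_kp, kp_mem]
    refine ⟨add_mem (ih _ _ _ hu.1) ?_, neg_mem (ih _ _ _ hu.2)⟩
    have := kmap_mem (h.deg k) k _ _ _ hu.2
    simpa using this

theorem kpiece_neg (P : ℤ → AddSubgroup M) (k : ℕ) (i j : ℤ) (hi : i < 0)
    (u : KT M k) (hu : u ∈ kpiece P k i j) : u = 0 := by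
  induction k generalizing i j with
  | zero => rwa [kpiece_zero_ne _ hi.ne, AddSubgroup.mem_bot] at hu
  | succ k ih =>
    obtain ⟨u, v, rfl⟩ := exists_kp u
    rw [kp_mem] at hu
    rw [ih _ _ hi _ hu.1, ih _ _ (by omega) _ hu.2]; rfl

theorem Van_neg (x : ℕ → M →+ M) (P : ℤ → AddSubgroup M) (k : ℕ) (i j : ℤ) (hi : i < 0) :
    Van x P k i j := fun f hf _ =>
  ⟨0, zero_mem _, by rw [kpiece_neg P k i j hi f hf, map_zero]⟩

/-! ### Operators acting by zero -/

/-- If `x k` acts as zero, the cone over it splits as a complex. -/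
theorem Van_succ_of_zero {x : ℕ → M →+ M} (P : ℤ → AddSubgroup M) (k : ℕ) (hx : x k = 0)
    (i j : ℤ) : Van x P (k + 1) i j ↔ Van x P k i j ∧ Van x P k (i - 1) (j - 1) := by
  have hd : ∀ u v : KT M k, kd x (k + 1) (kp u v) = kp (kd x k u) (-kd x k v) := by
    intro u v; rw [kd_kp, hx, kmap_zero, add_zero]
  constructor
  · intro h
    refine ⟨fun f hf hf0 => ?_, fun f hf hf0 => ?_⟩
    · obtain ⟨G, hG, hG'⟩ := h (kp f 0) ((kp_mem ..).2 ⟨hf, zero_mem _⟩)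
        (by rw [hd, hf0, map_zero, neg_zero]; rfl)
      obtain ⟨g, g', rfl⟩ := exists_kp G
      rw [hd, kp_inj] at hG'
      exact ⟨g, ((kp_mem ..).1 hG).1, hG'.1⟩
    · obtain ⟨G, hG, hG'⟩ := h (kp 0 f) ((kp_mem ..).2 ⟨zero_mem _, hf⟩)
        (by rw [hd, hf0, map_zero, neg_zero]; rfl)
      obtain ⟨g, g', rfl⟩ := exists_kp G
      rw [hd, kp_inj] at hG'
      have := ((kp_mem ..).1 hG).2
      rw [show i + 1 - 1 = i - 1 + 1 by ring] at this
      exact ⟨-g', neg_mem this, by rw [map_neg, hG'.2]⟩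
  · rintro ⟨h1, h2⟩ u huv hd0
    obtain ⟨u, v, rfl⟩ := exists_kp u
    rw [kp_mem] at huv
    rw [hd, kp_zero, kp_inj] at hd0
    obtain ⟨g, hg, rfl⟩ := h1 u huv.1 hd0.1
    obtain ⟨g', hg', rfl⟩ := h2 v huv.2 (neg_eq_zero.1 hd0.2)
    rw [show i - 1 + 1 = i + 1 - 1 by ring] at hg'
    exact ⟨kp g (-g'), (kp_mem ..).2 ⟨hg, neg_mem hg'⟩, by rw [hd, map_neg, neg_neg]⟩

theorem not_Van_add_iff {x : ℕ → M →+ M} (P : ℤ → AddSubgroup M) (k t : ℕ)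
    (hx : ∀ l, k ≤ l → x l = 0) (i j : ℤ) :
    ¬ Van x P (k + t) i j ↔ ∃ q : ℕ, q ≤ t ∧ ¬ Van x P k (i - q) (j - q) := by
  induction t generalizing i j with
  | zero => simp
  | succ t ih =>
    rw [← add_assoc, Van_succ_of_zero P (k + t) (hx _ (by omega)), not_and_or, ih, ih]
    constructor
    · rintro (⟨q, hq, h⟩ | ⟨q, hq, h⟩)
      · exact ⟨q, by omega, h⟩
      · refine ⟨q + 1, by omega, ?_⟩
        push_cast
        rwa [show i - (q + 1 : ℤ) = i - 1 - q by ring, show j - (q + 1 : ℤ) = j - 1 - q by ring]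
    · rintro ⟨q, hq, h⟩
      rcases q with _ | q
      · exact Or.inl ⟨0, by omega, h⟩
      · refine Or.inr ⟨q, by omega, ?_⟩
        push_cast at h
        rwa [show i - 1 - (q : ℤ) = i - (q + 1) by ring, show j - 1 - (q : ℤ) = j - (q + 1) by ring]

/-! ### Short exact sequences and dimension shifting -/

/-- A short exact sequence `0 → N → M → L → 0` of graded groups with operators, exact in each
degree. -/
structure SES (x : ℕ → N →+ N) (P : ℤ → AddSubgroup N) (x' : ℕ → M →+ M) (P' : ℤ → AddSubgroup M)
    (x'' : ℕ → L →+ L) (P'' : ℤ → AddSubgroup L) (f : N →+ M) (g : M →+ L) : Prop where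
  f_op : ∀ a v, f (x a v) = x' a (f v)
  g_op : ∀ a v, g (x' a v) = x'' a (g v)
  f_mem : ∀ j, ∀ v ∈ P j, f v ∈ P' j
  g_mem : ∀ j, ∀ v ∈ P' j, g v ∈ P'' j
  inj : ∀ v, f v = 0 → v = 0
  zero : ∀ v, g (f v) = 0
  ex : ∀ j, ∀ v ∈ P' j, g v = 0 → ∃ w ∈ P j, f w = v
  surj : ∀ j, ∀ v ∈ P'' j, ∃ w ∈ P' j, g w = v

section SES
variable {x : ℕ → N →+ N} {P : ℤ → AddSubgroup N} {x' : ℕ → M →+ M} {P' : ℤ → AddSubgroup M}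
    {x'' : ℕ → L →+ L} {P'' : ℤ → AddSubgroup L} {f : N →+ M} {g : M →+ L}

theorem SES.kinj (h : SES x P x' P' x'' P'' f g) (k : ℕ) (u : KT N k) (hu : kmap f k u = 0) :
    u = 0 := by
  induction k with
  | zero => exact h.inj u hu
  | succ k ih =>
    obtain ⟨u, v, rfl⟩ := exists_kp u
    rw [kmap_kp, kp_zero, kp_inj] at hu
    rw [ih _ hu.1, ih _ hu.2]; rfl

theorem SES.kzero (h : SES x P x' P' x'' P'' f g) (k : ℕ) (u : KT N k) :
    kmap g k (kmap f k u) = 0 := by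
  rw [kmap_kmap, show g.comp f = 0 by ext v; exact h.zero v, kmap_zero]

theorem SES.kex (h : SES x P x' P' x'' P'' f g) (k : ℕ) (i j : ℤ) (u : KT M k)
    (hu : u ∈ kpiece P' k i j) (h0 : kmap g k u = 0) : ∃ w ∈ kpiece P k i j, kmap f k w = u := by
  induction k generalizing i j with
  | zero =>
    by_cases hi : i = 0
    · subst hi; rw [kpiece_zero_zero] at hu ⊢; exact h.ex _ _ hu h0
    · rw [kpiece_zero_ne _ hi, AddSubgroup.mem_bot] at hu
      exact ⟨0, zero_mem _, by rw [hu, map_zero]⟩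
  | succ k ih =>
    obtain ⟨u, v, rfl⟩ := exists_kp u
    rw [kmap_kp, kp_zero, kp_inj] at h0
    rw [kp_mem] at hu
    obtain ⟨a, ha, rfl⟩ := ih _ _ _ hu.1 h0.1
    obtain ⟨b, hb, rfl⟩ := ih _ _ _ hu.2 h0.2
    exact ⟨kp a b, (kp_mem ..).2 ⟨ha, hb⟩, rfl⟩

theorem SES.ksurj (h : SES x P x' P' x'' P'' f g) (k : ℕ) (i j : ℤ) (u : KT L k)
    (hu : u ∈ kpiece P'' k i j) : ∃ w ∈ kpiece P' k i j, kmap g k w = u := by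
  induction k generalizing i j with
  | zero =>
    by_cases hi : i = 0
    · subst hi; rw [kpiece_zero_zero] at hu ⊢; exact h.surj _ _ hu
    · rw [kpiece_zero_ne _ hi, AddSubgroup.mem_bot] at hu
      exact ⟨0, zero_mem _, by rw [hu, map_zero]⟩
  | succ k ih =>
    obtain ⟨u, v, rfl⟩ := exists_kp u
    rw [kp_mem] at hu
    obtain ⟨a, ha, rfl⟩ := ih _ _ _ hu.1
    obtain ⟨b, hb, rfl⟩ := ih _ _ _ hu.2
    exact ⟨kp a b, (kp_mem ..).2 ⟨ha, hb⟩, rfl⟩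

/-- The part of the long exact homology sequence used for dimension shifting: if `H_{i+1}(M) = 0`
and `H_i(N) → H_i(M)` is zero, then the connecting map `H_{i+1}(L) → H_i(N)` is bijective. -/
theorem SES.shift (h : SES x P x' P' x'' P'' f g) (hx' : GOp x' P') (k : ℕ) (i j : ℤ)
    (hM : Van x' P' k (i + 1) j)
    (hN : ∀ z ∈ kpiece P k i j, kd x k z = 0 →
      ∃ w ∈ kpiece P' k (i + 1) j, kd x' k w = kmap f k z) :
    Van x'' P'' k (i + 1) j ↔ Van x P k i j := by
  have cf := kd_kmap h.f_op k
  have cg := kd_kmap h.g_op k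
  constructor
  · intro hv z hz hz0
    obtain ⟨w, hw, hwz⟩ := hN z hz hz0
    obtain ⟨a, ha, haw⟩ := hv (kmap g k w) (kmap_mem₀ h.g_mem _ _ _ _ hw)
      (by rw [cg, hwz, h.kzero])
    obtain ⟨b, hb, rfl⟩ := h.ksurj _ _ _ _ ha
    have hdb := kd_mem hx' _ _ _ _ hb
    rw [add_sub_cancel_right] at hdb
    obtain ⟨c, hc, hcw⟩ := h.kex k (i + 1) j (w - kd x' k b) (sub_mem hw hdb)
      (by rw [map_sub, ← cg, haw, sub_self])
    refine ⟨c, hc, ?_⟩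
    rw [← sub_eq_zero]
    apply h.kinj k
    rw [map_sub, ← cf, hcw, map_sub, kd_kd hx', hwz, sub_zero, sub_self]
  · intro hv m hm hm0
    obtain ⟨w, hw, rfl⟩ := h.ksurj _ _ _ _ hm
    have hdw := kd_mem hx' _ _ _ _ hw
    rw [add_sub_cancel_right] at hdw
    obtain ⟨z, hz, hzw⟩ := h.kex k i j _ hdw (by rw [← cg, hm0])
    obtain ⟨y, hy, rfl⟩ := hv z hz (h.kinj k _ (by rw [← cf, hzw, kd_kd hx']))
    obtain ⟨c, hc, hcw⟩ := hM (w - kmap f k y) (sub_mem hw (kmap_mem₀ h.f_mem _ _ _ _ hy))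
      (by rw [map_sub, cf, hzw, sub_self])
    exact ⟨kmap g k c, kmap_mem₀ h.g_mem _ _ _ _ hc, by
      rw [cg, hcw, map_sub, h.kzero, sub_zero]⟩

/-- If `H_0(N) → H_0(M)` is zero then `H_0(M) → H_0(L)` is bijective. -/
theorem SES.bottom (h : SES x P x' P' x'' P'' f g) (hx : GOp x P) (hx' : GOp x' P')
    (k : ℕ) (j : ℤ)
    (hN : ∀ z ∈ kpiece P k 0 j, kd x k z = 0 →
      ∃ w ∈ kpiece P' k (0 + 1) j, kd x' k w = kmap f k z) :
    Van x'' P'' k 0 j ↔ Van x' P' k 0 j := by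
  have cg := kd_kmap h.g_op k
  constructor
  · intro hv w hw hw0
    obtain ⟨a, ha, haw⟩ := hv (kmap g k w) (kmap_mem₀ h.g_mem _ _ _ _ hw)
      (by rw [cg, hw0, map_zero])
    obtain ⟨b, hb, rfl⟩ := h.ksurj _ _ _ _ ha
    have hdb := kd_mem hx' _ _ _ _ hb
    rw [add_sub_cancel_right] at hdb
    obtain ⟨z, hz, hzw⟩ := h.kex k 0 j (w - kd x' k b) (sub_mem hw hdb)
      (by rw [map_sub, ← cg, haw, sub_self])
    obtain ⟨c, hc, hcz⟩ := hN z hz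
      (kpiece_neg P k (0 - 1) j (by norm_num) _ (kd_mem hx _ _ _ _ hz))
    exact ⟨c + b, add_mem hc hb, by rw [map_add, hcz, hzw, sub_add_cancel]⟩
  · intro hv m hm hm0
    obtain ⟨w, hw, rfl⟩ := h.ksurj _ _ _ _ hm
    obtain ⟨c, hc, rfl⟩ := hv w hw
      (kpiece_neg P' k (0 - 1) j (by norm_num) _ (kd_mem hx' _ _ _ _ hw))
    exact ⟨kmap g k c, kmap_mem₀ h.g_mem _ _ _ _ hc, cg c⟩

end SES

/-! ### Regular sequences and acyclicity -/

/-- The inclusion of `M` as the part of homological degree zero of its Koszul complex. -/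
def kin : ∀ k, M →+ KT M k
  | 0 => AddMonoidHom.id M
  | k + 1 => AddMonoidHom.prod (kin k) 0

theorem kin_succ (k : ℕ) (w : M) : kin (k + 1) w = kp (kin k w) 0 := rfl

/-- `Bd x P k j w` says that `w` lies in `x 0 P_{j-1} + ⋯ + x (k-1) P_{j-1}`. -/
def Bd (x : ℕ → M →+ M) (P : ℤ → AddSubgroup M) : ℕ → ℤ → M → Prop
  | 0, _, w => w = 0
  | k + 1, j, w => ∃ v ∈ P (j - 1), Bd x P k j (w - x k v)

theorem kin_mem (P : ℤ → AddSubgroup M) (k : ℕ) (j : ℤ) (w : M) (hw : w ∈ P j) :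
    kin k w ∈ kpiece P k 0 j := by
  induction k with
  | zero => rw [kpiece_zero_zero]; exact hw
  | succ k ih => exact (kp_mem ..).2 ⟨ih, zero_mem _⟩

theorem exists_kin (P : ℤ → AddSubgroup M) (k : ℕ) (j : ℤ) (u : KT M k)
    (hu : u ∈ kpiece P k 0 j) : ∃ w ∈ P j, kin k w = u := by
  induction k with
  | zero => rw [kpiece_zero_zero] at hu; exact ⟨u, hu, rfl⟩
  | succ k ih =>
    obtain ⟨u, v, rfl⟩ := exists_kp u
    rw [kp_mem] at hu
    obtain ⟨w, hw, rfl⟩ := ih _ hu.1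
    refine ⟨w, hw, ?_⟩
    rw [kin_succ, kpiece_neg P k (0 - 1) (j - 1) (by norm_num) v hu.2]

theorem kmap_kin (f : M →+ N) (k : ℕ) (w : M) : kmap f k (kin k w) = kin k (f w) := by
  induction k with
  | zero => rfl
  | succ k ih => rw [kin_succ, kin_succ, kmap_kp, ih, map_zero]

theorem kd_kin (x : ℕ → M →+ M) (k : ℕ) (w : M) : kd x k (kin k w) = 0 := by
  induction k with
  | zero => rfl
  | succ k ih => rw [kin_succ, kd_kp, ih, map_zero, map_zero]; simp; rfl

theorem boundary_iff {x : ℕ → M →+ M} {P : ℤ → AddSubgroup M} (k : ℕ) (j : ℤ)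
    (w : M) : (∃ g ∈ kpiece P k 1 j, kd x k g = kin k w) ↔ Bd x P k j w := by
  induction k generalizing w with
  | zero =>
    simp only [Bd]
    constructor
    · rintro ⟨g, -, hg⟩; exact hg.symm
    · rintro rfl; exact ⟨0, zero_mem _, rfl⟩
  | succ k ih =>
    simp only [Bd, ← ih]
    constructor
    · rintro ⟨u, huv, hd⟩
      obtain ⟨u, v, rfl⟩ := exists_kp u
      rw [kp_mem] at huv
      rw [kd_kp, kin_succ, kp_inj] at hd
      obtain ⟨a, ha, rfl⟩ := exists_kin P k (j - 1) v (by simpa using huv.2)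
      exact ⟨a, ha, u, huv.1, by rw [map_sub, ← hd.1, kmap_kin, add_sub_cancel_right]⟩
    · rintro ⟨a, ha, u, hu, hd⟩
      refine ⟨kp u (kin k a), (kp_mem ..).2 ⟨hu, by simpa using kin_mem P k _ a ha⟩, ?_⟩
      rw [kd_kp, kin_succ, hd, kmap_kin, map_sub, sub_add_cancel, kd_kin, neg_zero]

theorem Van_zero_iff {x : ℕ → M →+ M} {P : ℤ → AddSubgroup M} (k : ℕ) (j : ℤ) :
    Van x P k 0 j ↔ ∀ w ∈ P j, Bd x P k j w := by
  constructor
  · intro h w hw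
    exact (boundary_iff k j w).1 (by simpa using h (kin k w) (kin_mem P k j w hw) (kd_kin x k w))
  · intro h f hf _
    obtain ⟨w, hw, rfl⟩ := exists_kin P k j f hf
    simpa using (boundary_iff k j w).2 (h w hw)

/-- The Koszul complex of a regular sequence is acyclic in positive homological degrees. -/
theorem Van_of_regular {x : ℕ → M →+ M} {P : ℤ → AddSubgroup M} (hx : GOp x P) (m : ℕ)
    (hreg : ∀ k < m, ∀ j, ∀ v ∈ P j, Bd x P k (j + 1) (x k v) → Bd x P k j v)
    (k : ℕ) (hk : k ≤ m) (i j : ℤ) (hi : 1 ≤ i) : Van x P k i j := by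
  induction k generalizing i j with
  | zero =>
    intro f hf _
    rw [kpiece_zero_ne _ (by omega), AddSubgroup.mem_bot] at hf
    exact ⟨0, zero_mem _, by rw [hf]; rfl⟩
  | succ k ih =>
    intro u huv hd
    obtain ⟨u, v, rfl⟩ := exists_kp u
    rw [kp_mem] at huv
    rw [kd_kp, kp_zero, kp_inj, neg_eq_zero] at hd
    have key : ∃ v' ∈ kpiece P k i (j - 1), kd x k v' = v := by
      rcases eq_or_lt_of_le hi with rfl | hi
      · obtain ⟨w, hw, rfl⟩ := exists_kin P k (j - 1) v (by simpa using huv.2)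
        rw [boundary_iff]
        apply hreg k (by omega) _ _ hw
        rw [← boundary_iff]
        refine ⟨-u, neg_mem (by simpa using huv.1), ?_⟩
        rw [map_neg, ← kmap_kin, neg_eq_iff_add_eq_zero, hd.1]
      · simpa using ih (by omega) (i - 1) (j - 1) (by omega) v huv.2 hd.2
    obtain ⟨v', hv', rfl⟩ := key
    have hxv' : kmap (x k) k v' ∈ kpiece P k i j := by
      simpa using kmap_mem (hx.deg k) k _ _ _ hv'
    have hc := kd_kmap (f := x k) (x := x) (x' := x) (fun a v => hx.comm _ _ _) k v'
    obtain ⟨u', hu', hdu'⟩ := ih (by omega) i j hi (u + kmap (x k) k v') (add_mem huv.1 hxv')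
      (by rw [map_add, hc, hd.1])
    refine ⟨kp u' (-v'), (kp_mem ..).2 ⟨hu', by simpa using neg_mem hv'⟩, ?_⟩
    rw [kd_kp, hdu', map_neg, map_neg, neg_neg, add_neg_cancel_right]

end Koszul

/-! ### Graded modules over the polynomial ring -/

/-- The variable `x_l` of `ℂ[x_0, …, x_{m-1}]`, and zero for `l ≥ m`. -/
def xvar (m l : ℕ) : PolyS m := if h : l < m then X ⟨l, h⟩ else 0

/-- Multiplication by the variables as a sequence of operators. Indexing by `ℕ` lets the operators
of the two polynomial rings acting on one module be compared. -/
def vop (m : ℕ) (M : Type) [AddCommGroup M] [Module (PolyS m) M] (l : ℕ) : M →+ M :=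
  DistribSMul.toAddMonoidHom M (xvar m l)

theorem vop_apply (m : ℕ) (M : Type) [AddCommGroup M] [Module (PolyS m) M] (l : ℕ) (v : M) :
    vop m M l v = xvar m l • v := rfl

theorem mem_hpiece {m : ℕ} {e : ℤ} {p : PolyS m} :
    p ∈ hpiece m e ↔ ∀ α, coeff α p ≠ 0 → (α.degree : ℤ) = e := by
  unfold hpiece
  split_ifs with h
  · rw [mem_homogeneousSubmodule]
    unfold IsHomogeneous IsWeightedHomogeneous
    refine forall_congr' fun α => forall_congr' fun _ => ?_
    rw [show Finsupp.weight 1 α = α.degree from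
      (DFunLike.congr_fun Finsupp.degree_eq_weight_one α).symm]
    omega
  · rw [Submodule.mem_bot]
    constructor
    · rintro rfl α h; simp at h
    · intro h'
      ext α
      by_contra hα
      have := h' α hα
      omega

/-- The homogeneous pieces of a graded free module, as additive subgroups. -/
def fP (m : ℕ) (b : ℤ → ℕ) (d : ℤ) : AddSubgroup (FreeMod m b) := (freePiece m b d).toAddSubgroup

theorem mem_fP {m : ℕ} {b : ℤ → ℕ} {d : ℤ} {v : FreeMod m b} :
    v ∈ fP m b d ↔ ∀ j i α, coeff α (v j i) ≠ 0 → (α.degree : ℤ) + j = d := by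
  have : v ∈ fP m b d ↔ ∀ j i, v j i ∈ hpiece m (d - j) := Iff.rfl
  rw [this]
  refine forall_congr' fun j => forall_congr' fun i => ?_
  rw [mem_hpiece]
  refine forall_congr' fun α => forall_congr' fun _ => ?_
  omega

theorem vop_free_apply {m : ℕ} {b : ℤ → ℕ} (l : ℕ) (v : FreeMod m b) (j : ℤ) (i : Fin (b j)) :
    (vop m (FreeMod m b) l v) j i = xvar m l * v j i := rfl

theorem coeff_xvar_mul_ne {m l : ℕ} (p : PolyS m) (α : Fin m →₀ ℕ)
    (h : coeff α (xvar m l * p) ≠ 0) : ∃ hl : l < m, ∃ β, α = β + Finsupp.single ⟨l, hl⟩ 1 ∧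
      coeff β p ≠ 0 := by
  unfold xvar at h
  split_ifs at h with hl
  · refine ⟨hl, α - Finsupp.single ⟨l, hl⟩ 1, ?_⟩
    rw [coeff_X_mul'] at h
    split_ifs at h with hs
    · refine ⟨?_, h⟩
      rw [tsub_add_cancel_of_le]
      rw [Finsupp.single_le_iff]
      have := Finsupp.mem_support_iff.1 hs
      omega
    · exact absurd rfl h
  · simp at h

theorem gop_free (m : ℕ) (b : ℤ → ℕ) : GOp (vop m (FreeMod m b)) (fP m b) where
  comm a c v := by simp only [vop_apply, smul_smul, mul_comm]
  deg a j v hv := by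
    rw [mem_fP] at hv ⊢
    intro j' i α hα
    rw [vop_free_apply] at hα
    obtain ⟨hl, β, rfl, hβ⟩ := coeff_xvar_mul_ne _ _ hα
    have := hv _ _ _ hβ
    simp only [map_add, Finsupp.degree_single]
    push_cast
    omega

/-- In a graded free module, `(x_0, …, x_{k-1})` consists of the vectors all of whose monomials are
divisible by one of these variables. -/
theorem bd_free_iff {m : ℕ} {b : ℤ → ℕ} (k : ℕ) (hk : k ≤ m) (d : ℤ) (w : FreeMod m b)
    (hw : w ∈ fP m b d) : Bd (vop m (FreeMod m b)) (fP m b) k d w ↔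
      ∀ j i α, (∀ l : Fin m, (l : ℕ) < k → α l = 0) → coeff α (w j i) = 0 := by
  induction k generalizing w with
  | zero =>
    simp only [Bd, Nat.not_lt_zero, false_imp_iff, implies_true, true_imp_iff]
    constructor
    · rintro rfl j i α; simp
    · intro h; ext j i α; simpa using h j i α
  | succ k ih =>
    have hxk : xvar m k = X ⟨k, by omega⟩ := dif_pos _
    have hsub : ∀ v ∈ fP m b (d - 1), w - vop m (FreeMod m b) k v ∈ fP m b d := fun v hv =>
      sub_mem hw (by simpa using (gop_free m b).deg k _ v hv)
    have step : Bd (vop m (FreeMod m b)) (fP m b) (k + 1) d w ↔ ∃ v ∈ fP m b (d - 1),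
        ∀ j i α, (∀ l : Fin m, (l : ℕ) < k → α l = 0) →
          coeff α ((w - vop m (FreeMod m b) k v) j i) = 0 := by
      simp only [Bd]
      refine exists_congr fun v => and_congr_right fun hv => ih (by omega) _ (hsub v hv)
    rw [step]
    constructor
    · rintro ⟨v, hv, h⟩ j i α hα
      have := h j i α (fun l hl => hα l (by omega))
      rw [DirectSum.sub_apply, Pi.sub_apply, vop_free_apply, coeff_sub, hxk, coeff_X_mul',
        if_neg, sub_zero] at this
      · exact this
      · simp [hα ⟨k, by omega⟩ (by simp)]
    · intro h
      -- the quotient of `w` by the variable `x_k`, monomial by monomial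
      let D : PolyS m →+ PolyS m :=
        { toFun := fun p => p.divMonomial (Finsupp.single ⟨k, by omega⟩ 1)
          map_zero' := zero_divMonomial _
          map_add' := fun p q => add_divMonomial p q _ }
      let v : FreeMod m b := DirectSum.map (fun j => D.compLeft (Fin (b j))) w
      have hv : ∀ j i α, coeff α (v j i) = coeff (Finsupp.single ⟨k, by omega⟩ 1 + α) (w j i) := by
        intro j i α
        simp only [v, DirectSum.map_apply]
        exact coeff_divMonomial ..
      refine ⟨v, ?_, ?_⟩
      · rw [mem_fP] at hw ⊢
        intro j i α hα
        rw [hv] at hα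
        have := hw _ _ _ hα
        simp only [map_add, Finsupp.degree_single] at this
        push_cast at this
        omega
      · intro j i α hα
        rw [DirectSum.sub_apply, Pi.sub_apply, vop_free_apply, coeff_sub, hxk, coeff_X_mul']
        split_ifs with hs
        · rw [hv, add_tsub_cancel_of_le, sub_self]
          rw [Finsupp.single_le_iff]
          have := Finsupp.mem_support_iff.1 hs
          omega
        · rw [sub_zero]
          apply h
          intro l hl
          rcases Nat.lt_succ_iff_lt_or_eq.1 hl with hl | hl
          · exact hα l hl
          · have : l = ⟨k, by omega⟩ := Fin.ext hl
            rw [this]; simpa using hs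

theorem Van_free_pos (m : ℕ) (b : ℤ → ℕ) (i j : ℤ) (hi : 1 ≤ i) :
    Van (vop m (FreeMod m b)) (fP m b) m i j := by
  refine Van_of_regular (gop_free m b) m ?_ m le_rfl i j hi
  intro k hk d v hv h
  rw [bd_free_iff k hk.le _ _ ((gop_free m b).deg k d v hv)] at h
  rw [bd_free_iff k hk.le _ _ hv]
  intro j i α hα
  have := h j i (Finsupp.single ⟨k, hk⟩ 1 + α) (fun l hl => by
    have : (⟨k, hk⟩ : Fin m) ≠ l := fun h => by rw [← h] at hl; exact absurd hl (lt_irrefl _)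
    simp [hα l hl, Finsupp.single_eq_of_ne this.symm])
  rw [vop_free_apply, show xvar m k = X ⟨k, hk⟩ from dif_pos _, coeff_X_mul] at this
  exact this

theorem bd_free_top_iff {m : ℕ} {b : ℤ → ℕ} (d : ℤ) (w : FreeMod m b)
    (hw : w ∈ fP m b d) : Bd (vop m (FreeMod m b)) (fP m b) m d w ↔
      ∀ j i, coeff 0 (w j i) = 0 := by
  rw [bd_free_iff m le_rfl d w hw]
  refine forall_congr' fun j => forall_congr' fun i => ⟨fun h => h 0 (by simp), fun h α hα => ?_⟩
  rw [show α = 0 by ext l; exact hα l l.2]; exact h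

/-- `H_0` of the Koszul complex of a graded free module sees the generators. -/
theorem Van_free_zero (m : ℕ) (b : ℤ → ℕ) (d : ℤ) :
    Van (vop m (FreeMod m b)) (fP m b) m 0 d ↔ b d = 0 := by
  rw [Van_zero_iff]
  constructor
  · intro h
    by_contra hb
    let i : Fin (b d) := ⟨0, Nat.pos_of_ne_zero hb⟩
    let w : FreeMod m b := DirectSum.of (fun j : ℤ => Fin (b j) → PolyS m) d (Pi.single i 1)
    have hw : w ∈ fP m b d := by
      rw [mem_fP]
      intro j i' α hα
      by_cases hj : j = d
      · subst hj
        simp only [w, DirectSum.of_eq_same] at hα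
        by_cases hi : i' = i
        · subst hi
          rw [Pi.single_eq_same, coeff_one] at hα
          have : α = 0 := by by_contra h0; exact hα (if_neg (Ne.symm h0))
          simp [this]
        · rw [Pi.single_eq_of_ne hi] at hα; simp at hα
      · simp only [w, DirectSum.of_eq_of_ne _ _ _ hj] at hα; simp at hα
    have := (bd_free_top_iff d w hw).1 (h w hw) d i
    simp [w] at this
  · intro hb w hw
    rw [bd_free_top_iff d w hw]
    intro j i
    by_contra hne
    have := mem_fP.1 hw j i 0 hne
    simp only [map_zero, Nat.cast_zero, zero_add] at this
    subst this
    exact absurd i.2 (by omega)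

theorem coeff_zero_of_mem {m : ℕ} {b : ℤ → ℕ} (w : FreeMod m b)
    (hw : w ∈ (mIdeal m) • (⊤ : Submodule (PolyS m) (FreeMod m b))) (j : ℤ) (i : Fin (b j)) :
    coeff 0 (w j i) = 0 := by
  induction hw using Submodule.smul_induction_on' with
  | smul p hp v _ =>
    have h0 : p ∈ RingHom.ker (constantCoeff : PolyS m →+* ℂ) := by
      refine (Ideal.span_le.2 ?_ : mIdeal m ≤ _) hp
      rintro _ ⟨l, rfl⟩
      simp [RingHom.mem_ker]
    rw [RingHom.mem_ker, constantCoeff_eq] at h0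
    change coeff 0 (p * v j i) = 0
    rw [← constantCoeff_eq] at h0 ⊢
    rw [map_mul, h0, zero_mul]
  | add x _ y _ hx hy => rw [DirectSum.add_apply, Pi.add_apply, coeff_add, hx, hy, add_zero]

/-! ### Homogeneous components -/

/-- The free module is spanned by its homogeneous elements. -/
theorem free_induction {m : ℕ} {b : ℤ → ℕ} {p : FreeMod m b → Prop}
    (hom : ∀ d, ∀ v ∈ fP m b d, p v) (zero : p 0) (add : ∀ v w, p v → p w → p (v + w))
    (v : FreeMod m b) : p v := by
  induction v using DirectSum.induction_on with
  | zero => exact zero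
  | add v w hv hw => exact add v w hv hw
  | of j f =>
    rw [← Finset.univ_sum_single f, map_sum]
    refine Finset.sum_induction _ p add zero fun i _ => ?_
    rw [(f i).as_sum]
    -- additivity of `g ↦ of j (single i g)` reduces to monomials
    let ψ : PolyS m →+ FreeMod m b :=
      (DirectSum.of (fun j : ℤ => Fin (b j) → PolyS m) j).comp (AddMonoidHom.single (fun _ : Fin (b j) => PolyS m) i)
    change p (ψ _)
    rw [map_sum]
    refine Finset.sum_induction _ p add zero fun α _ => hom (α.degree + j) _ ?_
    rw [mem_fP]
    intro j' i' β hβ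
    change coeff β (DirectSum.of (fun j : ℤ => Fin (b j) → PolyS m) j (Pi.single i _) j' i') ≠ 0
      at hβ
    by_cases hj : j' = j
    · subst hj
      rw [DirectSum.of_eq_same] at hβ
      by_cases hi : i' = i
      · subst hi
        rw [Pi.single_eq_same, coeff_monomial] at hβ
        split_ifs at hβ with h
        · rw [h]
        · exact absurd rfl hβ
      · rw [Pi.single_eq_of_ne hi] at hβ; simp at hβ
    · rw [DirectSum.of_eq_of_ne _ _ _ hj] at hβ; simp at hβ

/-- Projection of a graded free module to its part of degree `d`. -/
theorem free_proj (m : ℕ) (b : ℤ → ℕ) (d : ℤ) : ∃ pr : FreeMod m b →+ FreeMod m b,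
    (∀ v ∈ fP m b d, pr v = v) ∧ ∀ e ≠ d, ∀ v ∈ fP m b e, pr v = 0 := by
  let D (e : ℤ) : PolyS m →+ PolyS m :=
    if 0 ≤ e then (homogeneousComponent e.toNat : PolyS m →ₗ[ℂ] PolyS m).toAddMonoidHom else 0
  have hD : ∀ e p α, coeff α (D e p) = if (α.degree : ℤ) = e then coeff α p else 0 := by
    intro e p α
    simp only [D]
    split_ifs with h1 h2 h2
    · simp [coeff_homogeneousComponent, show α.degree = e.toNat by omega]
    · simp [coeff_homogeneousComponent, show α.degree ≠ e.toNat by omega]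
    · omega
    · simp
  refine ⟨DirectSum.map (fun j => (D (d - j)).compLeft (Fin (b j))), ?_, ?_⟩
  · intro v hv
    ext j i α
    rw [DirectSum.map_apply]
    change coeff α (D (d - j) (v j i)) = _
    rw [hD]
    split_ifs with h
    · rfl
    · by_contra hne
      have := mem_fP.1 hv j i α (Ne.symm hne)
      omega
  · intro e he v hv
    ext j i α
    rw [DirectSum.map_apply]
    change coeff α (D (d - j) (v j i)) = _
    rw [hD, DirectSum.zero_apply, Pi.zero_apply, coeff_zero]
    split_ifs with h
    · by_contra hne
      have := mem_fP.1 hv j i α hne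
      omega
    · rfl

/-- A preimage of a homogeneous element under a degree-preserving map from a graded free module can
be replaced by its homogeneous component of the right degree. -/
theorem graded_lift {m : ℕ} {b : ℤ → ℕ} {M : Type} [AddCommGroup M] (P : ℤ → AddSubgroup M)
    (π : FreeMod m b →+ M) (hπ : ∀ d, ∀ v ∈ fP m b d, π v ∈ P d) (d : ℤ)
    (hpr : ∃ pr : M →+ M, (∀ v ∈ P d, pr v = v) ∧ ∀ e ≠ d, ∀ v ∈ P e, pr v = 0)
    (v₀ : FreeMod m b) (hv₀ : π v₀ ∈ P d) : ∃ w ∈ fP m b d, π w = π v₀ := by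
  obtain ⟨pr, h1, h2⟩ := hpr
  have key : ∃ w ∈ fP m b d, π w = pr (π v₀) := by
    refine free_induction (p := fun v => ∃ w ∈ fP m b d, π w = pr (π v)) ?_ ?_ ?_ v₀
    · intro e v hv
      by_cases he : e = d
      · subst he; exact ⟨v, hv, (h1 _ (hπ _ _ hv)).symm⟩
      · exact ⟨0, zero_mem _, by rw [h2 e he _ (hπ _ _ hv), map_zero]⟩
    · exact ⟨0, zero_mem _, by simp⟩
    · rintro v w ⟨v', hv', ev⟩ ⟨w', hw', ew⟩
      exact ⟨v' + w', add_mem hv' hw', by simp [ev, ew]⟩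
  rwa [h1 _ hv₀] at key

section Resolution

variable {m : ℕ} {M : Type} [AddCommGroup M] [Module ℂ M] [Module (PolyS m) M]
  [IsScalarTower ℂ (PolyS m) M] {gM : GradedSMod m M}

/-- The pieces of a graded module, as additive subgroups. -/
def gP (gM : GradedSMod m M) (d : ℤ) : AddSubgroup M := (gM.piece d).toAddSubgroup

theorem module_proj (gM : GradedSMod m M) (d : ℤ) : ∃ pr : M →+ M,
    (∀ v ∈ gP gM d, pr v = v) ∧ ∀ e ≠ d, ∀ v ∈ gP gM e, pr v = 0 := by
  let e₀ := LinearEquiv.ofBijective (DirectSum.coeLinearMap gM.piece) gM.internal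
  have he : ∀ e (v : M) (hv : v ∈ gM.piece e),
      e₀.symm v = DirectSum.of (fun i => gM.piece i) e ⟨v, hv⟩ := by
    intro e v hv
    rw [LinearEquiv.symm_apply_eq]
    exact (DirectSum.coeLinearMap_of gM.piece e ⟨v, hv⟩).symm
  refine ⟨(gM.piece d).subtype.toAddMonoidHom.comp
    ((DFinsupp.evalAddMonoidHom d).comp e₀.symm.toLinearMap.toAddMonoidHom), ?_, ?_⟩
  · intro v hv
    change ((e₀.symm v) d : M) = v
    rw [he d v hv, DirectSum.of_eq_same]
  · intro e hne v hv
    change ((e₀.symm v) d : M) = 0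
    rw [he e v hv, DirectSum.of_eq_of_ne _ _ _ hne.symm]
    rfl

variable (F : MinFreeRes m M gM)

/-- The `i`-th syzygy module, as a submodule of the `i`-th free module. -/
abbrev syz (i : ℕ) : Submodule (PolyS m) (FreeMod m (F.b i)) := LinearMap.range (F.diff i)

/-- The grading of a syzygy module. -/
def sP (i : ℕ) (d : ℤ) : AddSubgroup (syz F i) :=
  (fP m (F.b i) d).comap (syz F i).subtype.toAddMonoidHom

theorem gop_syz (i : ℕ) : GOp (vop m (syz F i)) (sP F i) where
  comm a c v := by simp only [vop_apply, smul_smul, mul_comm]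
  deg a j v hv := (gop_free m (F.b i)).deg a j v hv

theorem ses_aug : SES (vop m (syz F 0)) (sP F 0) (vop m _) (fP m (F.b 0)) (vop m M) (gP gM)
    (syz F 0).subtype.toAddMonoidHom F.aug.toAddMonoidHom where
  f_op _ _ := rfl
  g_op _ _ := F.aug.map_smul _ _
  f_mem _ _ h := h
  g_mem _ _ h := F.graded_aug _ _ h
  inj v h := Subtype.ext h
  zero v := by
    have : (v : FreeMod m (F.b 0)) ∈ LinearMap.ker F.aug := F.exact_aug ▸ v.2
    exact this
  ex j v hv h := ⟨⟨v, F.exact_aug.le (h : v ∈ LinearMap.ker F.aug)⟩, hv, rfl⟩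
  surj j v hv := by
    obtain ⟨w, rfl⟩ := F.aug_surjective v
    exact graded_lift (gP gM) F.aug.toAddMonoidHom (fun d v h => F.graded_aug d v h) j
      (module_proj gM j) w hv

theorem ses_syz (i : ℕ) : SES (vop m (syz F (i + 1))) (sP F (i + 1)) (vop m _)
    (fP m (F.b (i + 1))) (vop m (syz F i)) (sP F i)
    (syz F (i + 1)).subtype.toAddMonoidHom (F.diff i).rangeRestrict.toAddMonoidHom where
  f_op _ _ := rfl
  g_op _ _ := (F.diff i).rangeRestrict.map_smul _ _
  f_mem _ _ h := h
  g_mem _ _ h := F.graded_diff _ _ _ h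
  inj v h := Subtype.ext h
  zero v := by
    have : (v : FreeMod m (F.b (i + 1))) ∈ LinearMap.ker (F.diff i) := F.exact i ▸ v.2
    exact Subtype.ext this
  ex j v hv h :=
    ⟨⟨v, (F.exact i).le (congrArg Subtype.val h : v ∈ LinearMap.ker (F.diff i))⟩, hv, rfl⟩
  surj j v hv := by
    obtain ⟨_, w, rfl⟩ := v
    obtain ⟨w', hw', h⟩ := graded_lift (fP m (F.b i)) (F.diff i).toAddMonoidHom
      (fun d v h => F.graded_diff i d v h) j (free_proj m _ j) w hv
    exact ⟨w', hw', Subtype.ext h⟩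

/-- The inclusion of a syzygy module induces zero on Koszul homology: in degree zero by minimality,
in positive degrees by acyclicity of free modules. -/
theorem syz_null (i n : ℕ) (j : ℤ) (z : KT (syz F i) m) (hz : z ∈ kpiece (sP F i) m n j)
    (h0 : kd (vop m (syz F i)) m z = 0) : ∃ w ∈ kpiece (fP m (F.b i)) m (n + 1) j,
      kd (vop m _) m w = kmap (syz F i).subtype.toAddMonoidHom m z := by
  rcases n with _ | n
  · obtain ⟨w, hw, rfl⟩ := exists_kin _ m j z (by simpa using hz)
    rw [kmap_kin, Nat.cast_zero, zero_add, boundary_iff, bd_free_top_iff _ _ hw]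
    obtain ⟨_, v, rfl⟩ := w
    exact coeff_zero_of_mem _ (F.minimal i v)
  · refine Van_free_pos m _ _ j (by omega) _ (kmap_mem₀ (fun _ _ h => h) _ _ _ _ hz) ?_
    rw [kd_kmap (x := vop m (syz F i)) (fun _ _ => rfl), h0, map_zero]

theorem Van_syz_iff (i n : ℕ) (j : ℤ) :
    Van (vop m (syz F i)) (sP F i) m n j ↔ F.b (i + 1 + n) j = 0 := by
  induction n generalizing i with
  | zero =>
    rw [Nat.cast_zero, add_zero, ← Van_free_zero m]
    exact (ses_syz F i).bottom (gop_syz F _) (gop_free m _) m j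
      (by simpa using syz_null F (i + 1) 0 j)
  | succ n ih =>
    rw [show i + 1 + (n + 1) = i + 1 + 1 + n by ring, ← ih (i + 1), Nat.cast_succ]
    exact (ses_syz F i).shift (gop_free m _) m n j (Van_free_pos m _ _ j (by omega))
      (syz_null F (i + 1) n j)

/-- The graded Betti numbers of a minimal resolution are detected by Koszul homology. -/
theorem Van_iff (i : ℕ) (j : ℤ) : Van (vop m M) (gP gM) m i j ↔ F.b i j = 0 := by
  rcases i with _ | n
  · rw [Nat.cast_zero, ← Van_free_zero m]
    exact (ses_aug F).bottom (gop_syz F _) (gop_free m _) m j (by simpa using syz_null F 0 0 j)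
  · rw [show n + 1 = 0 + 1 + n by ring, ← Van_syz_iff F 0 n, add_comm (0 + 1) n, zero_add,
      Nat.cast_succ]
    exact (ses_aug F).shift (gop_free m _) m n j (Van_free_pos m _ _ j (by omega))
      (syz_null F 0 n j)

end Resolution

/-! ### Change of rings and maximal degrees -/

/-- The nonvanishing part of
`β_{i,j}^S(E) = ∑_{p + q = i} β_{p,j-q}^R(E) * binom(N, q)`. -/
theorem betti_ne_zero_iff (n N : ℕ) (E : Type) [AddCommGroup E] [Module ℂ E]
    [Module (PolyS (n + 1)) E] [IsScalarTower ℂ (PolyS (n + 1)) E]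
    [Module (PolyS (n + 1 + N)) E] [IsScalarTower ℂ (PolyS (n + 1 + N)) E]
    (hact : ∀ (s : PolyS (n + 1 + N)) (x : E), s • x = (killY n N s) • x)
    (gE : GradedSMod (n + 1) E) (G : MinFreeRes (n + 1) E gE)
    (gE' : GradedSMod (n + 1 + N) E) (hp : ∀ j, gE'.piece j = gE.piece j)
    (F : MinFreeRes (n + 1 + N) E gE') (i : ℕ) (j : ℤ) :
    F.b i j ≠ 0 ↔ ∃ q : ℕ, q ≤ N ∧ q ≤ i ∧ G.b (i - q) (j - q) ≠ 0 := by
  have hop : vop (n + 1 + N) E = vop (n + 1) E := by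
    funext l
    ext v
    rw [vop_apply, vop_apply, hact]
    congr 1
    unfold xvar killY
    by_cases h1 : l < n + 1
    · rw [dif_pos h1, dif_pos (by omega), aeval_X, dif_pos h1]
    · rw [dif_neg h1]
      split_ifs
      · rw [aeval_X, dif_neg h1]
      · rw [map_zero]
  have hP : gP gE' = gP gE := by funext d; simp only [gP, hp]
  have hz : ∀ l, n + 1 ≤ l → vop (n + 1) E l = 0 := by
    intro l hl
    ext v
    rw [vop_apply, xvar, dif_neg (by omega), zero_smul]; rfl
  rw [Ne, ← Van_iff F, hop, hP, not_Van_add_iff _ _ _ hz]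
  refine exists_congr fun q => and_congr_right fun _ => ?_
  constructor
  · intro h
    have hq : q ≤ i := by
      by_contra hlt
      exact h (Van_neg _ _ _ _ _ (by omega))
    rw [← Nat.cast_sub hq, Van_iff G] at h
    exact ⟨hq, h⟩
  · rintro ⟨hq, h⟩
    rwa [← Nat.cast_sub hq, Van_iff G]

theorem tmax_isGreatest {c : ℤ → ℕ} (hf : (Function.support c).Finite) (hc : c ≠ 0) :
    IsGreatest {j | c j ≠ 0} (tmax c) := by
  have hne : {j | c j ≠ 0}.Nonempty := Function.support_nonempty_iff.2 hc
  exact ⟨Int.csSup_mem hne hf.bddAbove, fun j hj => le_csSup hf.bddAbove hj⟩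


/-- If `E` has strictly increasing maximal degree sequence
`(s_0, …, s_{r-1})` over `R = ℂ[x_0,…,x_n]`, then as a module over `S = R[y_1,…,y_N]`
(annihilated by the `y` variables) its maximal degree sequence is
`(s_0, …, s_{r-1}, s_{r-1}+1, …, s_{r-1}+N)`. -/
theorem stmt8 (n N r : ℕ) (hr : 0 < r) (E : Type) [AddCommGroup E] [Module ℂ E]
    [Module (PolyS (n + 1)) E] [IsScalarTower ℂ (PolyS (n + 1)) E]
    [Module (PolyS (n + 1 + N)) E] [IsScalarTower ℂ (PolyS (n + 1 + N)) E]
    (hact : ∀ (s : PolyS (n + 1 + N)) (x : E), s • x = (killY n N s) • x)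
    (gE : GradedSMod (n + 1) E) (G : MinFreeRes (n + 1) E gE)
    (hlen : ∀ i, r ≤ i → G.b i = 0)
    (hcols : ∀ i, i < r → G.b i ≠ 0)
    (hinc : ∀ i, i + 1 < r → tmax (G.b i) < tmax (G.b (i + 1)))
    (gE' : GradedSMod (n + 1 + N) E) (hp : ∀ j, gE'.piece j = gE.piece j)
    (F : MinFreeRes (n + 1 + N) E gE') :
    (∀ i, i < r → tmax (F.b i) = tmax (G.b i)) ∧
    (∀ q : ℕ, 1 ≤ q → q ≤ N → tmax (F.b (r - 1 + q)) = tmax (G.b (r - 1)) + q) ∧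
    (∀ i, r + N ≤ i → F.b i = 0) ∧
    (∀ i, i < r + N → F.b i ≠ 0) := by
  have key := betti_ne_zero_iff n N E hact gE G gE' hp F
  have hG : ∀ p, p < r → IsGreatest {j | G.b p j ≠ 0} (tmax (G.b p)) := fun p hpr =>
    tmax_isGreatest (G.bfin p) (hcols p hpr)
  have hG_lt : ∀ p j, G.b p j ≠ 0 → p < r := by
    intro p j h
    by_contra hlt
    rw [hlen p (by omega)] at h
    exact h rfl
  -- a strictly increasing integer sequence grows by at least one at each step
  have hgrow : ∀ d p, p + d < r → tmax (G.b p) + d ≤ tmax (G.b (p + d)) := by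
    intro d
    induction d with
    | zero => intro p _; simp
    | succ d ih =>
      intro p hpd
      have h1 := ih p (by omega)
      have h2 := hinc (p + d) hpd
      rw [← add_assoc]
      push_cast
      omega
  -- the top degree in column `p + q`, where `p` is the largest column of `G` that contributes
  have main : ∀ p q : ℕ, p < r → q ≤ N → (q = 0 ∨ p = r - 1) →
      IsGreatest {j | F.b (p + q) j ≠ 0} (tmax (G.b p) + q) := by
    intro p q hpr hq hpq
    constructor
    · refine (key _ _).2 ⟨q, hq, by omega, ?_⟩
      rw [Nat.add_sub_cancel, add_sub_cancel_right]
      exact (hG p hpr).1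
    · intro j hj
      obtain ⟨q', hq', hle, hb⟩ := (key _ _).1 hj
      have hlt := hG_lt _ _ hb
      have h1 := (hG _ hlt).2 hb
      have h2 := hgrow (p - (p + q - q')) (p + q - q') (by omega)
      rw [show p + q - q' + (p - (p + q - q')) = p by omega] at h2
      omega
  refine ⟨fun i hi => ?_, fun q _ hq => ?_, fun i hi => ?_, fun i hi => ?_⟩
  · have h := (main i 0 hi (Nat.zero_le _) (Or.inl rfl)).csSup_eq
    exact h.trans (by rw [Nat.cast_zero, add_zero])
  · exact (main (r - 1) q (by omega) hq (Or.inr rfl)).csSup_eq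
  · funext j
    by_contra hne
    obtain ⟨q, hq, hle, hb⟩ := (key i j).1 hne
    have := hG_lt _ _ hb
    omega
  · intro h0
    have : ∃ p q, p < r ∧ q ≤ N ∧ (q = 0 ∨ p = r - 1) ∧ i = p + q := by
      rcases lt_or_ge i r with h | h
      · exact ⟨i, 0, h, Nat.zero_le _, Or.inl rfl, rfl⟩
      · exact ⟨r - 1, i - (r - 1), by omega, by omega, Or.inr rfl, by omega⟩
    obtain ⟨p, q, h1, h2, h3, rfl⟩ := this
    exact (main p q h1 h2 h3).1 (by rw [h0]; rfl)
end
end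

section
/- Let 0 → A → B → C → 0 be a short exact sequence of finitely generated graded modules over a standard graded polynomial ring S, and suppose that for every i, the minimal free resolutions satisfy: no generator degree of the i-th step of the minimal resolution of A coincides with a generator degree of the (i+1)-st step of the minimal resolution of C (i.e., β_{i,j}(A) ≠ 0 implies β_{i+1,j}(C) = 0). Then the Horseshoe resolution is minimal, and β_{i,j}(B) = β_{i,j}(A) + β_{i,j}(C) for all i, j. -/
/-!
Let `P` and `Q` be the minimal resolutions of `A` and `C`. The Horseshoe Lemma gives a graded
resolution of `B` with terms `P_n ⊕ Q_n` and differential `(a, c) ↦ (d a + θ_n c, d c)`, where the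
degree-preserving maps `θ_n : Q_{n+1} → P_n` come from successive lifts (`exists_gluing`). An entry
of `θ_n` is homogeneous of degree the difference of the degrees of two generators, so it can have a
nonzero constant term only if these degrees coincide. The hypothesis excludes this, hence the
Horseshoe resolution is minimal (`exists_horseshoe`).

It remains to see that the number of generators of each degree is the same in any two minimal
resolutions of `B` (`Res.card_eq`). Lifts of the identity in both directions compose to chain
endomorphisms homotopic to the identity, and by minimality a null-homotopic map vanishes modulo the
irrelevant ideal `𝔪` (`Res.inM_of_lift_zero`). So the constant terms of the two lifts form mutually
inverse matrices over `ℂ`. As the lifts preserve degrees, these matrices are block diagonal with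
one block for each degree, and the blocks must be square.

All free modules are put in the form `ι →₀ S` with a degree function `ι → ℤ`; here `ι` may be a
disjoint union of sets of generators, as needed for `P_n ⊕ Q_n`.
-/

open MvPolynomial DirectSum

noncomputable section

namespace Horseshoe

variable {m : ℕ}

/-! ### Graded free modules -/

lemma mul_mem_hpiece {d : ℕ} {e : ℤ} {p q : PolyS m}
    (hp : p ∈ homogeneousSubmodule (Fin m) ℂ d) (hq : q ∈ hpiece m e) :
    p * q ∈ hpiece m (d + e) := by
  unfold hpiece at *
  split_ifs at hq with h
  · rw [if_pos (by omega), show ((d : ℤ) + e).toNat = d + e.toNat by omega]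
    exact IsHomogeneous.mul hp hq
  · rw [(Submodule.mem_bot ℂ).1 hq, mul_zero]
    exact zero_mem _

lemma one_mem_hpiece : (1 : PolyS m) ∈ hpiece m 0 := by
  rw [hpiece, if_pos le_rfl]
  exact isHomogeneous_one (Fin m) ℂ

lemma constantCoeff_eq_zero_of_mem_hpiece {e : ℤ} (he : e ≠ 0) {p : PolyS m}
    (hp : p ∈ hpiece m e) : constantCoeff p = 0 := by
  unfold hpiece at hp
  split_ifs at hp with h
  · rw [constantCoeff_eq]
    exact IsHomogeneous.coeff_eq_zero hp (by simp; omega)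
  · rw [(Submodule.mem_bot ℂ).1 hp, map_zero]

/-- Projection of the polynomial ring onto its degree-`e` piece, for an integer `e`. -/
def hcomp (m : ℕ) (e : ℤ) : PolyS m →ₗ[ℂ] PolyS m :=
  if 0 ≤ e then homogeneousComponent e.toNat else 0

lemma hcomp_self {e : ℤ} {p : PolyS m} (hp : p ∈ hpiece m e) : hcomp m e p = p := by
  unfold hpiece at hp
  unfold hcomp
  split_ifs at hp ⊢ with h
  · rw [homogeneousComponent_of_mem hp, if_pos rfl]
  · simpa using ((Submodule.mem_bot ℂ).1 hp).symm

lemma hcomp_ne {e e' : ℤ} (h : e' ≠ e) {p : PolyS m} (hp : p ∈ hpiece m e') :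
    hcomp m e p = 0 := by
  unfold hpiece at hp
  unfold hcomp
  split_ifs at hp ⊢ with h1 h2
  · rw [homogeneousComponent_of_mem hp, if_neg (by omega)]
  · rw [(Submodule.mem_bot ℂ).1 hp, map_zero]
  · rfl
  · rfl

lemma iSup_hpiece : ⨆ e, hpiece m e = ⊤ := by
  rw [eq_top_iff]
  rintro p -
  rw [← sum_homogeneousComponent p]
  refine sum_mem fun n _ => Submodule.mem_iSup_of_mem (n : ℤ) ?_
  simpa [hpiece] using homogeneousComponent_isHomogeneous n p

/-- The degree-`d` piece of the free module on generators `k : ι` of degrees `deg k`. -/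
def fpiece {ι : Type} (deg : ι → ℤ) (d : ℤ) : Submodule ℂ (ι →₀ PolyS m) where
  carrier := {x | ∀ k, x k ∈ hpiece m (d - deg k)}
  add_mem' hx hy k := add_mem (hx k) (hy k)
  zero_mem' _ := zero_mem _
  smul_mem' c _ hx k := Submodule.smul_mem _ c (hx k)

lemma single_mem_fpiece {ι : Type} {deg : ι → ℤ} {d : ℤ} (k : ι) {p : PolyS m}
    (hp : p ∈ hpiece m (d - deg k)) : Finsupp.single k p ∈ fpiece deg d := by
  classical
  intro l
  rw [Finsupp.single_apply]
  split_ifs with h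
  · rwa [← h]
  · exact zero_mem _

lemma fpiece_iSupIndep {ι : Type} (deg : ι → ℤ) : iSupIndep (fpiece (m := m) deg) := by
  intro d
  rw [Submodule.disjoint_def]
  intro x hx hx'
  ext1 k
  let π : (ι →₀ PolyS m) →ₗ[ℂ] PolyS m := hcomp m (d - deg k) ∘ₗ Finsupp.lapply k
  have hker : ⨆ e, ⨆ (_ : e ≠ d), fpiece (m := m) deg e ≤ LinearMap.ker π := by
    refine iSup₂_le fun e he y hy => ?_
    exact hcomp_ne (by omega) (hy k)
  have h := hker hx'
  rw [Finsupp.zero_apply, ← hcomp_self (hx k)]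
  exact h

lemma iSup_fpiece {ι : Type} (deg : ι → ℤ) : ⨆ d, fpiece (m := m) deg d = ⊤ := by
  rw [eq_top_iff]
  rintro x -
  induction x using Finsupp.induction_linear with
  | zero => exact zero_mem _
  | add x y hx hy => exact add_mem hx hy
  | single k p =>
    have hp : p ∈ ⨆ e, hpiece m e := by rw [iSup_hpiece]; trivial
    refine Submodule.iSup_induction _
      (motive := fun p => Finsupp.single k p ∈ ⨆ d, fpiece (m := m) deg d) hp ?_ ?_ ?_
    · intro e p hp
      refine Submodule.mem_iSup_of_mem (e + deg k) (single_mem_fpiece k ?_)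
      rwa [add_sub_cancel_right]
    · rw [Finsupp.single_zero]
      exact zero_mem _
    · intro p q hp hq
      rw [Finsupp.single_add]
      exact add_mem hp hq

/-- The free module on generators `k : ι` of degrees `deg k`, as a graded module. -/
def freeGr {ι : Type} (deg : ι → ℤ) : GradedSMod m (ι →₀ PolyS m) where
  piece := fpiece deg
  internal := isInternal_submodule_of_iSupIndep_of_iSup_eq_top (fpiece_iSupIndep deg)
    (iSup_fpiece deg)
  smul_mem d p hp j x hx k := by
    rw [Finsupp.smul_apply, smul_eq_mul, add_sub_assoc]
    exact mul_mem_hpiece hp (hx k)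

lemma hpiece_smul_mem {M : Type} [AddCommGroup M] [Module ℂ M] [Module (PolyS m) M]
    [IsScalarTower ℂ (PolyS m) M] (gM : GradedSMod m M) {e j : ℤ} {p : PolyS m} {x : M}
    (hp : p ∈ hpiece m e) (hx : x ∈ gM.piece j) : p • x ∈ gM.piece (e + j) := by
  unfold hpiece at hp
  split_ifs at hp with h
  · have := gM.smul_mem _ p hp j x hx
    rwa [show ((e.toNat : ℕ) : ℤ) = e by omega] at this
  · rw [(Submodule.mem_bot ℂ).1 hp, zero_smul]
    exact zero_mem _

/-! ### Degree-preserving maps and lifting -/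

section Maps

variable {M N : Type} [AddCommGroup M] [Module ℂ M] [Module (PolyS m) M]
  [IsScalarTower ℂ (PolyS m) M] [AddCommGroup N] [Module ℂ N] [Module (PolyS m) N]
  [IsScalarTower ℂ (PolyS m) N]

/-- A linear map of graded modules that preserves degrees. -/
def Graded (gM : GradedSMod m M) (gN : GradedSMod m N) (u : M →ₗ[PolyS m] N) : Prop :=
  ∀ d x, x ∈ gM.piece d → u x ∈ gN.piece d

/-- A homogeneous element in the image of a degree-preserving map has a homogeneous preimage:
take the component of the right degree of any preimage. -/
lemma Graded.exists_homogeneous {gM : GradedSMod m M} {gN : GradedSMod m N}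
    {u : M →ₗ[PolyS m] N} (hu : Graded gM gN u) {d : ℤ} {y : M} (hy : u y ∈ gN.piece d) :
    ∃ y' ∈ gM.piece d, u y' = u y := by
  let := gM.internal.chooseDecomposition
  let := gN.internal.chooseDecomposition
  have key : ∀ x : M, u (decompose gM.piece x d : M) = (decompose gN.piece (u x) d : N) := by
    intro x
    have hx : x ∈ ⨆ e, gM.piece e := by
      rw [gM.internal.submodule_iSup_eq_top]; trivial
    refine Submodule.iSup_induction _ (motive := fun x =>
      u (decompose gM.piece x d : M) = (decompose gN.piece (u x) d : N)) hx ?_ ?_ ?_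
    · intro e x hx
      by_cases h : e = d
      · subst h
        rw [decompose_of_mem_same _ hx, decompose_of_mem_same _ (hu _ _ hx)]
      · rw [decompose_of_mem_ne _ hx h, decompose_of_mem_ne _ (hu _ _ hx) h, map_zero]
    · simp
    · intro x y hx hy
      simp [decompose_add, hx, hy]
  exact ⟨decompose gM.piece y d, SetLike.coe_mem _, by rw [key, decompose_of_mem_same _ hy]⟩

/-- Graded projectivity of a graded free module. -/
lemma exists_lift {ι : Type} {deg : ι → ℤ} {gM : GradedSMod m M} {gN : GradedSMod m N}
    {p : M →ₗ[PolyS m] N} (hp : Graded gM gN p) {u : (ι →₀ PolyS m) →ₗ[PolyS m] N}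
    (hu : Graded (freeGr deg) gN u) (h : ∀ x, ∃ y, p y = u x) :
    ∃ v : (ι →₀ PolyS m) →ₗ[PolyS m] M, Graded (freeGr deg) gM v ∧ ∀ x, p (v x) = u x := by
  have hex : ∀ k, ∃ y ∈ gM.piece (deg k), p y = u (Finsupp.single k 1) := by
    intro k
    obtain ⟨y, hy⟩ := h (Finsupp.single k 1)
    rw [← hy]
    apply hp.exists_homogeneous
    rw [hy]
    exact hu _ _ (single_mem_fpiece k (by rw [sub_self]; exact one_mem_hpiece))
  choose y hy hpy using hex
  refine ⟨Finsupp.linearCombination _ y, fun d x hx => ?_, fun x => ?_⟩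
  · rw [Finsupp.linearCombination_apply]
    refine sum_mem fun k _ => ?_
    have := hpiece_smul_mem gM (hx k) (hy k)
    rwa [sub_add_cancel] at this
  · have : p ∘ₗ Finsupp.linearCombination _ y = u := by
      ext k
      simpa using hpy k
    exact LinearMap.congr_fun this x

end Maps

/-! ### Reduction modulo the irrelevant ideal -/

/-- The elements of `𝔪F`, where `F` is free: those all of whose coordinates have vanishing
constant term. -/
def InM {ι : Type} (x : ι →₀ PolyS m) : Prop := ∀ k, constantCoeff (x k) = 0

lemma InM.add {ι : Type} {x y : ι →₀ PolyS m} (hx : InM x) (hy : InM y) : InM (x + y) :=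
  fun k => by rw [Finsupp.add_apply, map_add, hx, hy, add_zero]

lemma InM.smul {ι : Type} {x : ι →₀ PolyS m} (p : PolyS m) (hx : InM x) : InM (p • x) :=
  fun k => by rw [Finsupp.smul_apply, smul_eq_mul, map_mul, hx, mul_zero]

lemma apply_eq_sum {ι κ : Type} (u : (ι →₀ PolyS m) →ₗ[PolyS m] (κ →₀ PolyS m))
    (x : ι →₀ PolyS m) (l : κ) : u x l = ∑ k ∈ x.support, x k * u (Finsupp.single k 1) l := by
  conv_lhs => rw [← Finsupp.sum_single x]
  rw [Finsupp.sum, map_sum, Finsupp.finsetSum_apply]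
  refine Finset.sum_congr rfl fun k _ => ?_
  rw [← mul_one (x k), ← smul_eq_mul, ← Finsupp.smul_single, map_smul, Finsupp.smul_apply]
  simp

lemma InM.map {ι κ : Type} (u : (ι →₀ PolyS m) →ₗ[PolyS m] (κ →₀ PolyS m))
    {x : ι →₀ PolyS m} (hx : InM x) : InM (u x) := fun l => by
  rw [apply_eq_sum, map_sum]
  exact Finset.sum_eq_zero fun k _ => by rw [map_mul, hx, zero_mul]

/-- A map of free modules has image in `𝔪F` once it does so on the generators. -/
lemma inM_of_single {ι κ : Type} (u : (ι →₀ PolyS m) →ₗ[PolyS m] (κ →₀ PolyS m))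
    (h : ∀ k, InM (u (Finsupp.single k 1))) (x : ι →₀ PolyS m) : InM (u x) := fun l => by
  rw [apply_eq_sum, map_sum]
  exact Finset.sum_eq_zero fun k _ => by rw [map_mul, h, mul_zero]

/-- The entries of a degree-preserving map between generators of different degrees have no
constant term. -/
lemma constantCoeff_entry {ι κ : Type} {deg : ι → ℤ} {deg' : κ → ℤ}
    {u : (ι →₀ PolyS m) →ₗ[PolyS m] (κ →₀ PolyS m)} (hu : Graded (freeGr deg) (freeGr deg') u)
    {k : ι} {l : κ} (h : deg k ≠ deg' l) :
    constantCoeff (u (Finsupp.single k 1) l) = 0 := by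
  have := hu (deg k) (Finsupp.single k 1)
    (single_mem_fpiece k (by rw [sub_self]; exact one_mem_hpiece)) l
  exact constantCoeff_eq_zero_of_mem_hpiece (by omega) this

/-! ### Uniqueness of minimal resolutions -/

/-- A minimal graded free resolution of `M`, the `n`-th free module being given by an arbitrary
type `ι n` of homogeneous generators with degrees `deg n`. -/
structure Res (m : ℕ) (M : Type) [AddCommGroup M] [Module ℂ M]
    [Module (PolyS m) M] [IsScalarTower ℂ (PolyS m) M] (gM : GradedSMod m M) where
  ι : ℕ → Type
  deg : ∀ n, ι n → ℤ
  d : ∀ n, (ι (n + 1) →₀ PolyS m) →ₗ[PolyS m] (ι n →₀ PolyS m)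
  aug : (ι 0 →₀ PolyS m) →ₗ[PolyS m] M
  aug_surj : Function.Surjective aug
  exact_aug : ∀ x, aug x = 0 ↔ ∃ y, d 0 y = x
  exact : ∀ n x, d n x = 0 ↔ ∃ y, d (n + 1) y = x
  graded_d : ∀ n, Graded (freeGr (deg (n + 1))) (freeGr (deg n)) (d n)
  graded_aug : Graded (freeGr (deg 0)) gM aug
  minimal : ∀ n x, InM (d n x)

section Resolutions

variable {M : Type} [AddCommGroup M] [Module ℂ M] [Module (PolyS m) M]
  [IsScalarTower ℂ (PolyS m) M] {gM : GradedSMod m M}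

lemma Res.d_d (P : Res m M gM) (n : ℕ) (x) : P.d n (P.d (n + 1) x) = 0 :=
  (P.exact n _).2 ⟨x, rfl⟩

lemma Res.aug_d (P : Res m M gM) (x) : P.aug (P.d 0 x) = 0 :=
  (P.exact_aug _).2 ⟨x, rfl⟩

/-- Comparison theorem: the identity of `M` lifts to a degree-preserving chain map. -/
lemma Res.exists_comparison (P Q : Res m M gM) :
    ∃ φ : ∀ n, (P.ι n →₀ PolyS m) →ₗ[PolyS m] (Q.ι n →₀ PolyS m),
      (∀ n, Graded (freeGr (P.deg n)) (freeGr (Q.deg n)) (φ n)) ∧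
      (∀ x, Q.aug (φ 0 x) = P.aug x) ∧ ∀ n x, Q.d n (φ (n + 1) x) = φ n (P.d n x) := by
  let T (n : ℕ) := {φ : (P.ι n →₀ PolyS m) →ₗ[PolyS m] (Q.ι n →₀ PolyS m) //
    Graded (freeGr (P.deg n)) (freeGr (Q.deg n)) φ ∧ ∀ x, ∃ y, Q.d n y = φ (P.d n x)}
  have base : ∃ φ : T 0, ∀ x, Q.aug (φ.1 x) = P.aug x := by
    obtain ⟨φ, hφ, h⟩ := exists_lift Q.graded_aug P.graded_aug fun x => Q.aug_surj _
    exact ⟨⟨φ, hφ, fun x => (Q.exact_aug _).1 (by rw [h, P.aug_d])⟩, h⟩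
  have step : ∀ n (φ : T n), ∃ φ' : T (n + 1), ∀ x, Q.d n (φ'.1 x) = φ.1 (P.d n x) := by
    rintro n ⟨φ, hφ, h⟩
    obtain ⟨φ', hφ', h'⟩ := exists_lift (Q.graded_d n) (u := φ ∘ₗ P.d n)
      (fun d x hx => hφ _ _ (P.graded_d n _ _ hx)) h
    refine ⟨⟨φ', hφ', fun x => (Q.exact n _).1 ?_⟩, h'⟩
    rw [h', LinearMap.comp_apply, P.d_d, map_zero]
  obtain ⟨φ₀, h₀⟩ := base
  choose next hnext using step
  let φ : ∀ n, T n := fun n => Nat.rec φ₀ next n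
  exact ⟨fun n => (φ n).1, fun n => (φ n).2.1, h₀, fun n => hnext n (φ n)⟩

/-- A chain endomorphism of a minimal resolution lifting `0` vanishes modulo `𝔪`: it is
null-homotopic, `η = d s + s d`, and `d` has image in `𝔪F`. The homotopy is built one
degree at a time, and all that has to be remembered is the last component `s`. -/
lemma Res.inM_of_lift_zero (P : Res m M gM)
    (η : ∀ n, (P.ι n →₀ PolyS m) →ₗ[PolyS m] (P.ι n →₀ PolyS m))
    (h₀ : ∀ x, P.aug (η 0 x) = 0) (h : ∀ n x, P.d n (η (n + 1) x) = η n (P.d n x)) (n : ℕ) (x) :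
    InM (η n x) := by
  have lift : ∀ n (u : (P.ι n →₀ PolyS m) →ₗ[PolyS m] (P.ι n →₀ PolyS m)),
      (∀ x, ∃ y, P.d n y = u x) →
      ∃ s : (P.ι n →₀ PolyS m) →ₗ[PolyS m] (P.ι (n + 1) →₀ PolyS m), ∀ x, P.d n (s x) = u x := by
    intro n u hu
    choose y hy using fun k => hu (Finsupp.single k 1)
    refine ⟨Finsupp.linearCombination _ y, fun x => ?_⟩
    have : P.d n ∘ₗ Finsupp.linearCombination _ y = u := by
      ext1 k
      ext1
      simpa using hy k
    exact LinearMap.congr_fun this x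
  have key : ∀ n, (∃ s : (P.ι n →₀ PolyS m) →ₗ[PolyS m] (P.ι (n + 1) →₀ PolyS m),
      ∀ x, η n (P.d n x) = P.d n (s (P.d n x))) ∧ ∀ x, InM (η n x) := by
    intro n
    induction n with
    | zero =>
      obtain ⟨s, hs⟩ := lift 0 (η 0) fun x => (P.exact_aug _).1 (h₀ x)
      exact ⟨⟨s, fun x => (hs _).symm⟩, fun x => hs x ▸ P.minimal _ _⟩
    | succ n ih =>
      obtain ⟨⟨s, hs⟩, -⟩ := ih
      obtain ⟨s', hs'⟩ := lift (n + 1) (η (n + 1) - s ∘ₗ P.d n) fun x => by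
        refine (P.exact n _).1 ?_
        rw [LinearMap.sub_apply, map_sub, h, hs, LinearMap.comp_apply, sub_self]
      have heq : ∀ x, η (n + 1) x = P.d (n + 1) (s' x) + s (P.d n x) := fun x => by
        rw [hs', LinearMap.sub_apply, LinearMap.comp_apply, sub_add_cancel]
      refine ⟨⟨s', fun x => ?_⟩, fun x => ?_⟩
      · rw [heq, P.d_d, map_zero, add_zero]
      · rw [heq]
        exact (P.minimal _ _).add ((P.minimal _ _).map s)
  exact (key n).2 x

/-- The constant terms of the comparison maps form matrices over `ℂ` that are block diagonal for
the degrees and inverse to one another; hence the bound on the number of generators. -/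
lemma Res.card_le (P Q : Res m M gM) (n : ℕ) (j : ℤ) [Finite {k // P.deg n k = j}]
    [Finite {k // Q.deg n k = j}] :
    Nat.card {k // P.deg n k = j} ≤ Nat.card {k // Q.deg n k = j} := by
  classical
  obtain ⟨φ, hφ, hφ₀, hφd⟩ := P.exists_comparison Q
  obtain ⟨ψ, hψ, hψ₀, hψd⟩ := Q.exists_comparison P
  have hM := P.inM_of_lift_zero (fun n => ψ n ∘ₗ φ n - LinearMap.id)
    (fun x => by simp [hψ₀, hφ₀]) (fun n x => by simp [hψd, hφd]) n
  have := Fintype.ofFinite {k // P.deg n k = j}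
  have := Fintype.ofFinite {k // Q.deg n k = j}
  let X : Matrix {k // Q.deg n k = j} {k // P.deg n k = j} ℂ :=
    fun l k => constantCoeff (φ n (Finsupp.single k.1 1) l.1)
  let Y : Matrix {k // P.deg n k = j} {k // Q.deg n k = j} ℂ :=
    fun k l => constantCoeff (ψ n (Finsupp.single l.1 1) k.1)
  have hYX : Y * X = 1 := by
    ext k' k
    have h1 := hM (Finsupp.single k.1 1) k'.1
    simp only [LinearMap.sub_apply, LinearMap.comp_apply, LinearMap.id_apply, Finsupp.sub_apply,
      map_sub, sub_eq_zero] at h1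
    rw [apply_eq_sum, map_sum] at h1
    have h2 : constantCoeff ((Finsupp.single k.1 (1 : PolyS m)) k'.1)
        = (1 : Matrix {k // P.deg n k = j} {k // P.deg n k = j} ℂ) k' k := by
      rw [Finsupp.single_apply, Matrix.one_apply]
      by_cases h : k' = k
      · simp [h]
      · rw [if_neg (fun h' => h (Subtype.ext h'.symm)), if_neg h, map_zero]
    rw [← h2, ← h1, Matrix.mul_apply]
    set x := φ n (Finsupp.single k.1 1) with hx
    let F : Q.ι n → ℂ := fun l => constantCoeff (x l * ψ n (Finsupp.single l 1) k'.1)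
    have h3 : ∑ l, Y k' l * X l k = ∑ l : {k // Q.deg n k = j}, F l.1 :=
      Finset.sum_congr rfl fun l _ => by simp only [F, X, Y, map_mul, hx, mul_comm]
    rw [h3, ← Finset.sum_image (f := F) (g := Subtype.val) (s := Finset.univ)
      (fun _ _ _ _ h => Subtype.ext h)]
    -- Both sums equal the sum of `F` over the union of their index sets.
    refine (Finset.sum_subset (Finset.subset_union_left (s₂ := x.support)) fun l _ hl => ?_).trans
      (Finset.sum_subset Finset.subset_union_right fun l _ hl => ?_).symm
    · have hl' : P.deg n k.1 ≠ Q.deg n l := fun h =>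
        hl (Finset.mem_image.2 ⟨⟨l, by rw [← h, k.2]⟩, Finset.mem_univ _, rfl⟩)
      simp only [F, map_mul, hx, constantCoeff_entry (hφ n) hl', zero_mul]
    · simp only [F, Finsupp.notMem_support_iff.1 hl, zero_mul, map_zero]
  have hinj : Function.Injective X.mulVecLin := by
    refine Function.LeftInverse.injective (g := Y.mulVecLin) fun v => ?_
    simp [Matrix.mulVec_mulVec, hYX]
  simpa [Nat.card_eq_fintype_card] using LinearMap.finrank_le_finrank_of_injective hinj

lemma Res.card_eq (P Q : Res m M gM) (n : ℕ) (j : ℤ) [Finite {k // P.deg n k = j}]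
    [Finite {k // Q.deg n k = j}] :
    Nat.card {k // P.deg n k = j} = Nat.card {k // Q.deg n k = j} :=
  (P.card_le Q n j).antisymm (Q.card_le P n j)

end Resolutions

/-! ### Generators of `⊕_j S(-j)^{b j}` -/

/-- The standard basis of `⊕_j S(-j)^{b j}`; the generator `⟨j, i⟩` has degree `j`. -/
def generators (b : ℤ → ℕ) : Module.Basis (Σ j, Fin (b j)) (PolyS m) (FreeMod m b) :=
  DFinsupp.basis fun j => Pi.basisFun (PolyS m) (Fin (b j))

lemma generators_repr (b : ℤ → ℕ) (x : FreeMod m b) (k : Σ j, Fin (b j)) :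
    (generators b).repr x k = x k.1 k.2 := rfl

lemma generators_repr_mem (b : ℤ → ℕ) (x : FreeMod m b) (d : ℤ) :
    (generators b).repr x ∈ (freeGr (m := m) (fun k : Σ j, Fin (b j) => k.1)).piece d ↔
      x ∈ freePiece m b d :=
  ⟨fun h j i => h ⟨j, i⟩, fun h k => h k.1 k.2⟩

lemma generators_inM (b : ℤ → ℕ) {x : FreeMod m b}
    (hx : x ∈ mIdeal m • (⊤ : Submodule (PolyS m) (FreeMod m b))) :
    InM ((generators b).repr x) := by
  have hm : ∀ p ∈ mIdeal m, constantCoeff p = 0 := by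
    intro p hp
    have : mIdeal m ≤ RingHom.ker (constantCoeff (R := ℂ) (σ := Fin m)) :=
      Ideal.span_le.2 (by rintro _ ⟨i, rfl⟩; simp)
    exact this hp
  refine Submodule.smul_induction_on hx (fun p hp y _ k => ?_) fun x y hx hy => ?_
  · rw [map_smul, Finsupp.smul_apply, smul_eq_mul, map_mul, hm p hp, zero_mul]
  · rw [map_add]
    exact hx.add hy

section Main

variable {M : Type} [AddCommGroup M] [Module ℂ M] [Module (PolyS m) M]
  [IsScalarTower ℂ (PolyS m) M] {gM : GradedSMod m M}

/-- The resolution `F`, expressed in the coordinates of its generators. -/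
def ofMinFreeRes (F : MinFreeRes m M gM) : Res m M gM where
  ι n := Σ j, Fin (F.b n j)
  deg n k := k.1
  d n := (generators (F.b n)).repr.toLinearMap ∘ₗ F.diff n ∘ₗ
    (generators (F.b (n + 1))).repr.symm.toLinearMap
  aug := F.aug ∘ₗ (generators (F.b 0)).repr.symm.toLinearMap
  aug_surj := F.aug_surjective.comp (generators (F.b 0)).repr.symm.surjective
  exact_aug x := by
    obtain ⟨x, rfl⟩ := (generators (F.b 0)).repr.surjective x
    rw [(generators (F.b 1)).repr.surjective.exists]
    simpa using SetLike.ext_iff.1 F.exact_aug x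
  exact n x := by
    obtain ⟨x, rfl⟩ := (generators (F.b (n + 1))).repr.surjective x
    rw [(generators (F.b (n + 2))).repr.surjective.exists]
    simpa using SetLike.ext_iff.1 (F.exact n) x
  graded_d n d x hx := by
    obtain ⟨x, rfl⟩ := (generators (F.b (n + 1))).repr.surjective x
    rw [generators_repr_mem] at hx
    simpa [generators_repr_mem] using F.graded_diff n d x hx
  graded_aug d x hx := by
    obtain ⟨x, rfl⟩ := (generators (F.b 0)).repr.surjective x
    rw [generators_repr_mem] at hx
    simpa using F.graded_aug d x hx
  minimal n x := generators_inM _ (F.minimal n _)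

/-- The generators of degree `j` in the `n`-th step of `F`. -/
def fiberEquiv (F : MinFreeRes m M gM) (n : ℕ) (j : ℤ) :
    {k // (ofMinFreeRes F).deg n k = j} ≃ Fin (F.b n j) where
  toFun k := k.2 ▸ k.1.2
  invFun i := ⟨⟨j, i⟩, rfl⟩
  left_inv := by rintro ⟨⟨j, i⟩, rfl⟩; rfl
  right_inv _ := rfl

instance (F : MinFreeRes m M gM) (n : ℕ) (j : ℤ) :
    Finite {k // (ofMinFreeRes F).deg n k = j} := Finite.of_equiv _ (fiberEquiv F n j).symm

lemma card_fiber (F : MinFreeRes m M gM) (n : ℕ) (j : ℤ) :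
    Nat.card {k // (ofMinFreeRes F).deg n k = j} = F.b n j := by
  rw [Nat.card_congr (fiberEquiv F n j), Nat.card_fin]

end Main

/-! ### The Horseshoe resolution -/

/-- A free module on a disjoint union of generators is a direct sum. -/
def split (ι κ : Type) :
    (ι ⊕ κ →₀ PolyS m) ≃ₗ[PolyS m] (ι →₀ PolyS m) × (κ →₀ PolyS m) :=
  Finsupp.sumFinsuppLEquivProdFinsupp (PolyS m)

lemma split_mem {ι κ : Type} {deg : ι → ℤ} {deg' : κ → ℤ} {d : ℤ} {x : ι ⊕ κ →₀ PolyS m} :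
    x ∈ (freeGr (Sum.elim deg deg')).piece d ↔
      (split ι κ x).1 ∈ (freeGr deg).piece d ∧ (split ι κ x).2 ∈ (freeGr deg').piece d :=
  ⟨fun h => ⟨fun k => h (Sum.inl k), fun k => h (Sum.inr k)⟩,
    fun h k => k.casesOn h.1 h.2⟩

lemma split_inM {ι κ : Type} {x : ι ⊕ κ →₀ PolyS m} (h₁ : InM (split ι κ x).1)
    (h₂ : InM (split ι κ x).2) : InM x := fun k => k.casesOn h₁ h₂

section Horseshoe

variable {A B C : Type} [AddCommGroup A] [Module ℂ A] [Module (PolyS m) A]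
  [IsScalarTower ℂ (PolyS m) A]
  [AddCommGroup B] [Module ℂ B] [Module (PolyS m) B] [IsScalarTower ℂ (PolyS m) B]
  [AddCommGroup C] [Module ℂ C] [Module (PolyS m) C] [IsScalarTower ℂ (PolyS m) C]
  {gA : GradedSMod m A} {gB : GradedSMod m B} {gC : GradedSMod m C}
  {f : A →ₗ[PolyS m] B} {g : B →ₗ[PolyS m] C}

/-- The gluing data of the Horseshoe Lemma: a lift `σ` of the augmentation of `C` to `B`, and
maps `θ n : Q_{n+1} → P_n` that, together with the differentials of the resolutions `P` of `A` and
`Q` of `C`, make up the differential of the Horseshoe resolution. -/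
lemma exists_gluing (hf : Function.Injective f) (hg : Function.Surjective g)
    (hfg : LinearMap.ker g = LinearMap.range f) (hfgr : Graded gA gB f) (hggr : Graded gB gC g)
    (P : Res m A gA) (Q : Res m C gC) :
    ∃ (σ : (Q.ι 0 →₀ PolyS m) →ₗ[PolyS m] B)
      (θ : ∀ n, (Q.ι (n + 1) →₀ PolyS m) →ₗ[PolyS m] (P.ι n →₀ PolyS m)),
      Graded (freeGr (Q.deg 0)) gB σ ∧ (∀ x, g (σ x) = Q.aug x) ∧
      (∀ n, Graded (freeGr (Q.deg (n + 1))) (freeGr (P.deg n)) (θ n)) ∧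
      (∀ x, f (P.aug (θ 0 x)) = -σ (Q.d 0 x)) ∧
      ∀ n x, P.d n (θ (n + 1) x) = -θ n (Q.d (n + 1) x) := by
  obtain ⟨σ, hσ, hgσ⟩ := exists_lift hggr Q.graded_aug fun x => hg _
  let T (n : ℕ) := {θ : (Q.ι (n + 1) →₀ PolyS m) →ₗ[PolyS m] (P.ι n →₀ PolyS m) //
    Graded (freeGr (Q.deg (n + 1))) (freeGr (P.deg n)) θ ∧
    ∀ x, ∃ y, P.d n y = -θ (Q.d (n + 1) x)}
  have base : ∃ θ : T 0, ∀ x, f (P.aug (θ.1 x)) = -σ (Q.d 0 x) := by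
    obtain ⟨θ, hθ, h⟩ := exists_lift (p := f ∘ₗ P.aug) (u := -(σ ∘ₗ Q.d 0))
      (fun d x hx => hfgr _ _ (P.graded_aug _ _ hx))
      (fun d x hx => neg_mem (hσ _ _ (Q.graded_d 0 _ _ hx))) fun x => by
        have hx : -(σ (Q.d 0 x)) ∈ LinearMap.range f := by
          rw [← hfg, LinearMap.mem_ker, map_neg, hgσ, Q.aug_d, neg_zero]
        obtain ⟨a, ha⟩ := hx
        obtain ⟨y, rfl⟩ := P.aug_surj a
        exact ⟨y, ha⟩
    refine ⟨⟨θ, hθ, fun x => (P.exact_aug _).1 (hf ?_)⟩, h⟩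
    have := h (Q.d 1 x)
    simp only [LinearMap.comp_apply, LinearMap.neg_apply, Q.d_d, map_zero, neg_zero] at this
    rw [map_neg, map_neg, this, map_zero, neg_zero]
  have step : ∀ n (θ : T n), ∃ θ' : T (n + 1), ∀ x, P.d n (θ'.1 x) = -θ.1 (Q.d (n + 1) x) := by
    rintro n ⟨θ, hθ, h⟩
    obtain ⟨θ', hθ', h'⟩ := exists_lift (P.graded_d n) (u := -(θ ∘ₗ Q.d (n + 1)))
      (fun d x hx => neg_mem (hθ _ _ (Q.graded_d _ _ _ hx))) h
    refine ⟨⟨θ', hθ', fun x => (P.exact n _).1 ?_⟩, h'⟩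
    rw [map_neg, h', LinearMap.neg_apply, LinearMap.comp_apply, Q.d_d, map_zero, neg_zero, neg_zero]
  obtain ⟨θ₀, h₀⟩ := base
  choose next hnext using step
  let θ : ∀ n, T n := fun n => Nat.rec θ₀ next n
  exact ⟨σ, fun n => (θ n).1, hσ, hgσ, fun n => (θ n).2.1, h₀, fun n => hnext n (θ n)⟩

/-- If no generator of `P_n` has the degree of a generator of `Q_{n+1}`, then the blocks `θ n` have
no constant terms and the Horseshoe resolution of `B` is minimal. Its `n`-th step has the
generators of `P_n` together with those of `Q_n`. -/
lemma exists_horseshoe (hf : Function.Injective f) (hg : Function.Surjective g)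
    (hfg : LinearMap.ker g = LinearMap.range f) (hfgr : Graded gA gB f) (hggr : Graded gB gC g)
    (P : Res m A gA) (Q : Res m C gC) (hdisj : ∀ n k l, Q.deg (n + 1) k ≠ P.deg n l) :
    ∃ H : Res m B gB,
      ∀ n j, Nonempty ({k // H.deg n k = j} ≃ {k // P.deg n k = j} ⊕ {k // Q.deg n k = j}) := by
  obtain ⟨σ, θ, hσ, hgσ, hθ, hθ₀, hθd⟩ := exists_gluing hf hg hfg hfgr hggr P Q
  have hgf : ∀ a, g (f a) = 0 := fun a => LinearMap.mem_ker.1 (hfg ▸ ⟨a, rfl⟩)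
  have hker : ∀ b, g b = 0 → ∃ x, f (P.aug x) = b := fun b hb => by
    obtain ⟨a, ha⟩ : b ∈ LinearMap.range f := hfg ▸ hb
    obtain ⟨x, rfl⟩ := P.aug_surj a
    exact ⟨x, ha⟩
  let blk (n : ℕ) : (P.ι (n + 1) →₀ PolyS m) × (Q.ι (n + 1) →₀ PolyS m) →ₗ[PolyS m]
      (P.ι n →₀ PolyS m) × (Q.ι n →₀ PolyS m) :=
    ((P.d n).coprod (θ n)).prod (Q.d n ∘ₗ LinearMap.snd _ _ _)
  have hblk : ∀ n a c, blk n (a, c) = (P.d n a + θ n c, Q.d n c) := fun n a c => rfl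
  have hblk0 : ∀ x, (f ∘ₗ P.aug).coprod σ x = 0 ↔ ∃ y, blk 0 y = x := by
    rintro ⟨a, c⟩
    rw [LinearMap.coprod_apply, LinearMap.comp_apply]
    constructor
    · intro h
      obtain ⟨c', rfl⟩ := (Q.exact_aug c).1 (by simpa [hgf, hgσ] using congrArg g h)
      obtain ⟨a', ha'⟩ := (P.exact_aug (a - θ 0 c')).1 (hf (by
        rw [map_sub, map_sub, hθ₀, sub_neg_eq_add, h, map_zero]))
      exact ⟨(a', c'), by rw [hblk, ha', sub_add_cancel]⟩
    · rintro ⟨⟨a', c'⟩, h⟩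
      obtain ⟨rfl, rfl⟩ := Prod.mk.inj h
      simp [P.aug_d, hθ₀]
  have hblkS : ∀ n x, blk n x = 0 ↔ ∃ y, blk (n + 1) y = x := by
    rintro n ⟨a, c⟩
    rw [hblk, Prod.mk_eq_zero]
    constructor
    · rintro ⟨h, hc⟩
      obtain ⟨c', rfl⟩ := (Q.exact n c).1 hc
      obtain ⟨a', ha'⟩ := (P.exact n (a - θ (n + 1) c')).1 (by
        rw [map_sub, hθd, sub_neg_eq_add, h])
      exact ⟨(a', c'), by rw [hblk, ha', sub_add_cancel]⟩
    · rintro ⟨⟨a', c'⟩, h⟩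
      obtain ⟨rfl, rfl⟩ := Prod.mk.inj h
      simp [P.d_d, Q.d_d, hθd]
  let H : Res m B gB :=
    { ι := fun n => P.ι n ⊕ Q.ι n
      deg := fun n => Sum.elim (P.deg n) (Q.deg n)
      d := fun n => (split _ _).symm.toLinearMap ∘ₗ blk n ∘ₗ (split _ _).toLinearMap
      aug := (f ∘ₗ P.aug).coprod σ ∘ₗ (split _ _).toLinearMap
      aug_surj := by
        intro b
        obtain ⟨c, hc⟩ := Q.aug_surj (g b)
        obtain ⟨a, ha⟩ := hker (b - σ c) (by rw [map_sub, hgσ, hc, sub_self])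
        refine ⟨(split _ _).symm (a, c), ?_⟩
        simp [ha]
      exact_aug := by
        intro x
        rw [(split _ _).symm.surjective.exists]
        simpa [LinearEquiv.symm_apply_eq] using hblk0 (split _ _ x)
      exact := by
        intro n x
        rw [(split _ _).symm.surjective.exists]
        simpa [LinearEquiv.symm_apply_eq] using hblkS n (split _ _ x)
      graded_d := by
        intro n d x hx
        rw [split_mem] at hx ⊢
        simp only [LinearMap.comp_apply, LinearEquiv.coe_coe, LinearEquiv.apply_symm_apply]
        exact ⟨add_mem (P.graded_d n _ _ hx.1) (hθ n _ _ hx.2), Q.graded_d n _ _ hx.2⟩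
      graded_aug := by
        intro d x hx
        rw [split_mem] at hx
        exact add_mem (hfgr _ _ (P.graded_aug _ _ hx.1)) (hσ _ _ hx.2)
      minimal := by
        intro n x
        apply split_inM
        all_goals
          simp only [LinearMap.comp_apply, LinearEquiv.coe_coe, LinearEquiv.apply_symm_apply]
        · exact (P.minimal n _).add
            (inM_of_single (θ n) (fun k l => constantCoeff_entry (hθ n) (hdisj n k l)) _)
        · exact Q.minimal n _ }
  exact ⟨H, fun n j => ⟨Equiv.subtypeSum⟩⟩

end Horseshoe

end Horseshoe

/-- Given a graded short exact sequence `0 → A → B → C → 0` such that no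
generator degree at step `i` of the minimal resolution of `A` coincides with a generator
degree at step `i+1` of the minimal resolution of `C`, the Horseshoe resolution is
minimal and `β_{i,j}(B) = β_{i,j}(A) + β_{i,j}(C)` for all `i, j`. -/
theorem stmt9 (m : ℕ)
    (A B C : Type) [AddCommGroup A] [Module ℂ A] [Module (PolyS m) A]
    [IsScalarTower ℂ (PolyS m) A]
    [AddCommGroup B] [Module ℂ B] [Module (PolyS m) B] [IsScalarTower ℂ (PolyS m) B]
    [AddCommGroup C] [Module ℂ C] [Module (PolyS m) C] [IsScalarTower ℂ (PolyS m) C]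
    (gA : GradedSMod m A) (gB : GradedSMod m B) (gC : GradedSMod m C)
    (f : A →ₗ[PolyS m] B) (g : B →ₗ[PolyS m] C)
    (hf : Function.Injective f) (hg : Function.Surjective g)
    (hfg : LinearMap.ker g = LinearMap.range f)
    (hfgr : ∀ (j : ℤ) (a : A), a ∈ gA.piece j → f a ∈ gB.piece j)
    (hggr : ∀ (j : ℤ) (b : B), b ∈ gB.piece j → g b ∈ gC.piece j)
    (FA : MinFreeRes m A gA) (FB : MinFreeRes m B gB) (FC : MinFreeRes m C gC)
    (hdisj : ∀ (i : ℕ) (j : ℤ), FA.b i j ≠ 0 → FC.b (i + 1) j = 0) :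
    ∀ (i : ℕ) (j : ℤ), FB.b i j = FA.b i j + FC.b i j := by
  intro i j
  let P := Horseshoe.ofMinFreeRes FA
  let Q := Horseshoe.ofMinFreeRes FC
  obtain ⟨H, hH⟩ := Horseshoe.exists_horseshoe hf hg hfg hfgr hggr P Q (by
    rintro n ⟨j, k⟩ ⟨j', l⟩ (rfl : j = j')
    have hC := hdisj n j (Fin.pos l).ne'
    exact (Fin.pos k).ne' hC)
  obtain ⟨e⟩ := hH i j
  have : Finite {k // H.deg i k = j} := Finite.of_equiv _ e.symm
  rw [← Horseshoe.card_fiber FB, ← Horseshoe.card_fiber FA, ← Horseshoe.card_fiber FC,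
    Horseshoe.Res.card_eq _ H, Nat.card_congr e, Nat.card_sum]

end
end
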